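/- Let p be an odd prime and let r ≥ 2, a ≥ 0 be integers. There exists an even hyperbolic p-elementary Gram matrix M ∈ M_r(ℤ) of length a if and only if all of the following hold: a ≤ r; r is even; if a is even then r ≡ 2 (mod 4); if a is odd then p ≡ (−1)^{r/2−1} (mod 4); and if r ≢ 2 (mod 8) then r > a > 0. -/

import Mathlib

open Matrix

/-- `M` is the Gram matrix of a hyperbolic lattice, i.e. of signature `(1, r-1)`: over `ℝ`
it is congruent to `diag(1, -1, …, -1)`. -/
def IsHyperbolicGram {r : ℕ} (M : Matrix (Fin r) (Fin r) ℤ) : Prop :=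
  ∃ P : Matrix (Fin r) (Fin r) ℝ, IsUnit P.det ∧
    Pᵀ * (M.map (Int.cast : ℤ → ℝ)) * P =
      Matrix.diagonal (fun i : Fin r => if (i : ℕ) = 0 then (1 : ℝ) else -1)

/-- `M` is `q`-elementary of length `a`: the cokernel of `M : ℤ^r → ℤ^r` is isomorphic to
`(ℤ/qℤ)^a`. -/
def ElemOfLength {r : ℕ} (q a : ℕ) (M : Matrix (Fin r) (Fin r) ℤ) : Prop :=
  Nonempty (((Fin r → ℤ) ⧸ LinearMap.range M.mulVecLin) ≃ₗ[ℤ] (Fin a → ZMod q))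

/-- `δ(M) = 0`, i.e. `zᵀ M⁻¹ z ∈ ℤ` for every integer vector `z`. -/
def DeltaZero {r : ℕ} (M : Matrix (Fin r) (Fin r) ℤ) : Prop :=
  ∀ z : Fin r → ℤ, ∃ n : ℤ,
    (fun i => (z i : ℚ)) ⬝ᵥ ((M.map (Int.cast : ℤ → ℚ))⁻¹ *ᵥ fun i => (z i : ℚ)) = (n : ℚ)

open Complex Filter Topology in
theorem tendsto_tsum_exp_neg_mul_sq_mul (u : ℝ → ℤ → ℂ) (hu : ∀ s n, ‖u s n‖ ≤ 1)
    (h0 : ∀ s, u s 0 = 1) :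
    Tendsto (fun s : ℝ => ∑' n : ℤ, cexp (-Real.pi * s * (n : ℂ) ^ 2) * u s n) atTop (𝓝 1) := by
  have key : ∑' n : ℤ, (if n = 0 then (1 : ℂ) else 0) = 1 := tsum_ite_eq 0 _
  rw [← key]
  have hnorm : ∀ (s : ℝ) (n : ℤ), ‖cexp (-Real.pi * s * (n : ℂ) ^ 2)‖ =
      Real.exp (-Real.pi * s * (n : ℝ) ^ 2) := by
    intro s n
    rw [show (-Real.pi * s * (n : ℂ) ^ 2 : ℂ) = ((-Real.pi * s * (n : ℝ) ^ 2 : ℝ) : ℂ) by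
      push_cast; ring, Complex.norm_exp_ofReal]
  have hsum : Summable fun n : ℤ => Real.exp (-Real.pi * 1 * (n : ℝ) ^ 2) := by
    have := ((summable_jacobiTheta₂_term_iff 0 I).2 (by simp)).norm
    refine this.congr fun n => ?_
    rw [← hnorm, jacobiTheta₂_term]
    congr 2
    push_cast
    linear_combination (Real.pi : ℂ) * (n : ℂ) ^ 2 * I_sq
  refine tendsto_tsum_of_dominated_convergence hsum ?_ ?_
  · intro n
    split_ifs with hn
    · subst hn
      simp [h0]
    · rw [tendsto_zero_iff_norm_tendsto_zero]
      have h1 : Tendsto (fun s : ℝ => Real.exp (-Real.pi * s * (n : ℝ) ^ 2)) atTop (𝓝 0) := by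
        refine Real.tendsto_exp_atBot.comp ?_
        have : 0 < Real.pi * (n : ℝ) ^ 2 := by positivity
        have h2 := tendsto_neg_atTop_atBot.comp (tendsto_id.const_mul_atTop this)
        refine h2.congr fun s => ?_
        simp; ring
      refine squeeze_zero (fun _ => norm_nonneg _) (fun s => ?_) h1
      rw [norm_mul, hnorm]
      exact mul_le_of_le_one_right (Real.exp_pos _).le (hu s n)
  · filter_upwards [eventually_ge_atTop 1] with s hs n
    rw [norm_mul, hnorm]
    refine (mul_le_of_le_one_right (Real.exp_pos _).le (hu s n)).trans ?_
    refine Real.exp_le_exp.2 ?_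
    have : 0 ≤ Real.pi * (n : ℝ) ^ 2 := by positivity
    nlinarith

open Complex Filter Topology in
theorem sum_range_cexp_sq_div (m : ℕ) (hm : 0 < m) :
    ∑ k ∈ Finset.range (2 * m), cexp (Real.pi * I * (k : ℂ) ^ 2 / ((2 * m : ℕ) : ℂ)) =
      1 / (-I / ((2 * m : ℕ) : ℂ)) ^ (1 / 2 : ℂ) := by
  set N : ℕ := 2 * m with hN
  have hNpos : 0 < N := by omega
  have hNR : (0 : ℝ) < N := by exact_mod_cast hNpos
  have hNC : (N : ℂ) ≠ 0 := by exact_mod_cast hNpos.ne'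
  have : NeZero N := ⟨hNpos.ne'⟩
  let u : ℕ → ℝ → ℤ → ℂ := fun k _ n => cexp (2 * Real.pi * (-I * k / N) * n)
  let v : ℝ → ℤ → ℂ := fun _ n => cexp (-Real.pi * I * (n : ℂ) ^ 2 / N)
  have hL : Tendsto (fun s : ℝ => ∑ k ∈ Finset.range N,
      cexp (Real.pi * I * (k : ℂ) ^ 2 / N) *
        ∑' n : ℤ, cexp (-Real.pi * s * (n : ℂ) ^ 2) * u k s n) atTop
      (𝓝 (∑ k ∈ Finset.range N, cexp (Real.pi * I * (k : ℂ) ^ 2 / N) * 1)) := by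
    refine tendsto_finsetSum _ fun k _ => Tendsto.const_mul _ ?_
    refine tendsto_tsum_exp_neg_mul_sq_mul _ (fun s n => ?_) (fun s => ?_)
    · simp only [u]
      rw [show (2 * Real.pi * (-I * k / N) * n : ℂ) =
        ((2 * Real.pi * (-k / N) * n : ℝ) : ℂ) * I by push_cast; ring, Complex.norm_exp_ofReal_mul_I]
    · simp [u]
  have hR : Tendsto (fun s : ℝ => 1 / (((1 / (N ^ 2 * s) : ℝ) : ℂ) - I / N) ^ (1 / 2 : ℂ) *
      (1 / (1 / (1 + I / (N * s))) ^ (1 / 2 : ℂ) *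
        ∑' n : ℤ, cexp (-Real.pi * s * (n : ℂ) ^ 2) * v s n)) atTop
      (𝓝 (1 / (((0 : ℝ) : ℂ) - I / N) ^ (1 / 2 : ℂ) * (1 / (1 / (1 + 0)) ^ (1 / 2 : ℂ) * 1))) := by
    have t0 : Tendsto (fun s : ℝ => 1 / ((N : ℝ) ^ 2 * s)) atTop (𝓝 0) := by
      have := (tendsto_id.const_mul_atTop (show (0 : ℝ) < (N : ℝ) ^ 2 by positivity))
      simpa only [one_div] using! this.inv_tendsto_atTop
    refine Tendsto.mul ?_ (Tendsto.mul ?_ ?_)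
    · refine Tendsto.div tendsto_const_nhds ?_ ?_
      · refine (continuousAt_cpow_const ?_).tendsto.comp
          (((continuous_ofReal.tendsto 0).comp t0).sub tendsto_const_nhds)
        rw [Complex.mem_slitPlane_iff]
        right
        simp [Complex.div_im, hNpos.ne']
      · rw [Ne, cpow_eq_zero_iff]
        simp [hNC]
    · have t1 : Tendsto (fun s : ℝ => I / ((N : ℂ) * s)) atTop (𝓝 0) := by
        have := ((continuous_ofReal.tendsto 0).comp t0).const_mul (I * N)
        simp only [ofReal_zero, mul_zero] at this
        refine this.congr fun s => ?_
        simp only [Function.comp]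
        push_cast
        by_cases hs : (s : ℂ) = 0
        · simp [hs]
        · field_simp
      have t2 : Tendsto (fun s : ℝ => 1 / (1 + I / ((N : ℂ) * s))) atTop (𝓝 (1 / (1 + 0))) :=
        Tendsto.div tendsto_const_nhds (tendsto_const_nhds.add t1) (by simp)
      refine Tendsto.div tendsto_const_nhds ((continuousAt_cpow_const ?_).tendsto.comp t2) (by simp)
      simp
    · refine tendsto_tsum_exp_neg_mul_sq_mul _ (fun s n => ?_) (fun s => ?_)
      · simp only [v]
        rw [show (-Real.pi * I * (n : ℂ) ^ 2 / N : ℂ) =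
          ((-Real.pi * n ^ 2 / N : ℝ) : ℂ) * I by push_cast; ring, Complex.norm_exp_ofReal_mul_I]
      · simp [v]
  have hmain := tendsto_nhds_unique (hL.congr' ?_) hR
  · simpa [neg_div] using hmain
  filter_upwards [eventually_gt_atTop 0] with s hs
  have hsC : (s : ℂ) ≠ 0 := by exact_mod_cast hs.ne'
  set a : ℂ := ((1 / (N ^ 2 * s) : ℝ) : ℂ) - I / N with ha
  have hare : 0 < a.re := by
    have : a.re = 1 / (N ^ 2 * s) := by
      rw [ha, sub_re, ofReal_re]
      simp [Complex.div_re]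
    rw [this]; positivity
  have ha0 : a ≠ 0 := by rintro h; simp [h] at hare
  set w : ℂ := 1 / (s + I / N) with hw
  have hsN : (s : ℂ) + I / N ≠ 0 := by
    intro h
    have := congrArg Complex.re h
    simp [Complex.div_re] at this
    exact hs.ne' this
  have hw0 : w ≠ 0 := one_div_ne_zero hsN
  have hwre : 0 < w.re := by
    rw [hw, one_div, Complex.inv_re]
    refine div_pos ?_ (normSq_pos.2 hsN)
    simpa [Complex.div_re] using hs
  have hNm : (N : ℂ) = 2 * m := by rw [hN]; push_cast; ring
  have haw : a = -I * (s + I / N) / (N * s) := by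
    rw [ha]
    push_cast
    field_simp
    linear_combination I_sq
  have hwa : 1 / a = w + I * N := by
    have hX : w * (s + I / N) = 1 := one_div_mul_cancel hsN
    have hN' : I / N * (N : ℂ) = I := div_mul_cancel₀ _ hNC
    rw [div_eq_iff ha0, haw, ← mul_div_assoc, eq_div_iff (mul_ne_zero hNC hsC)]
    linear_combination I * hX + N * (s + I / N) * I_sq - hN'
  have e1 : ∀ k : ℕ, cexp (Real.pi * I * (k : ℂ) ^ 2 / N) *
      ∑' n : ℤ, cexp (-Real.pi * s * (n : ℂ) ^ 2) * u k s n =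
      1 / (s : ℂ) ^ (1 / 2 : ℂ) * ∑' n : ℤ, cexp (-Real.pi * a * ((n * N + k : ℤ) : ℂ) ^ 2) := by
    intro k
    have h := Complex.tsum_exp_neg_quadratic (a := (s : ℂ)) (by simpa using hs) (-I * k / N)
    simp only [u, ← Complex.exp_add]
    rw [h, mul_left_comm, ← tsum_mul_left]
    congr 2
    ext n
    rw [← Complex.exp_add, Complex.exp_eq_exp_iff_exists_int]
    refine ⟨- (n * k + n ^ 2 * m), ?_⟩
    have h1 : I * (-I * k / N) = (k : ℂ) / N := by
      linear_combination -(k / N : ℂ) * I_sq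
    rw [h1, ha]
    push_cast
    field_simp
    rw [hNm]
    ring
  have e2 : ∑ k ∈ Finset.range N, ∑' n : ℤ, cexp (-Real.pi * a * ((n * N + k : ℤ) : ℂ) ^ 2) =
      ∑' n : ℤ, cexp (-Real.pi * a * (n : ℂ) ^ 2) := by
    have hsm : Summable fun n : ℤ => cexp (-Real.pi * a * (n : ℂ) ^ 2) := by
      refine ((summable_jacobiTheta₂_term_iff 0 (I * a)).2 (by simpa using hare)).congr fun n => ?_
      rw [jacobiTheta₂_term]
      congr 1
      linear_combination (Real.pi : ℂ) * a * (n : ℂ) ^ 2 * I_sq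
    have hsm' := ((Int.divModEquiv N).trans (Equiv.prodComm _ _)).symm.summable_iff.2 hsm
    rw [← ((Int.divModEquiv N).trans (Equiv.prodComm _ _)).symm.tsum_eq]
    refine Eq.trans ?_ hsm'.tsum_prod.symm
    rw [tsum_fintype, Finset.sum_range]
    rfl
  have e3 : ∑' n : ℤ, cexp (-Real.pi / a * (n : ℂ) ^ 2) =
      ∑' n : ℤ, cexp (-Real.pi * w * (n : ℂ) ^ 2) := by
    refine tsum_congr fun n => ?_
    rw [Complex.exp_eq_exp_iff_exists_int]
    refine ⟨- (n ^ 2 * m), ?_⟩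
    rw [div_eq_mul_one_div, hwa, hN]
    push_cast
    ring
  have e4 : (w * s) ^ (1 / 2 : ℂ) = w ^ (1 / 2 : ℂ) * (s : ℂ) ^ (1 / 2 : ℂ) := by
    rw [cpow_def_of_ne_zero (mul_ne_zero hw0 hsC), cpow_def_of_ne_zero hw0,
      cpow_def_of_ne_zero hsC, log_mul_ofReal s hs w hw0, ← Complex.exp_add, ofReal_log hs.le]
    congr 1
    ring
  have e5 : 1 / (1 + I / (N * s)) = w * s := by
    have h1 : (1 : ℂ) + I / (N * s) = (s + I / N) / s := by field_simp
    rw [h1, hw]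
    field_simp
  simp only [e1]
  rw [← Finset.mul_sum, e2, Complex.tsum_exp_neg_mul_int_sq hare, e3,
    Complex.tsum_exp_neg_mul_int_sq hwre, e5, e4]
  have e6 : ∑' n : ℤ, cexp (-Real.pi / w * (n : ℂ) ^ 2) =
      ∑' n : ℤ, cexp (-Real.pi * s * (n : ℂ) ^ 2) * v s n := by
    refine tsum_congr fun n => ?_
    simp only [v]
    rw [← Complex.exp_add, hw]
    congr 1
    field_simp
    ring
  rw [e6]
  ring

open Complex in
theorem sum_range_cexp_sq_div_eq_ofReal_mul (m : ℕ) (hm : 0 < m) :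
    ∃ R : ℝ, 0 < R ∧
      ∑ k ∈ Finset.range (2 * m), cexp (Real.pi * I * (k : ℂ) ^ 2 / ((2 * m : ℕ) : ℂ)) =
        R * cexp (Real.pi / 4 * I) := by
  have hN : (0 : ℝ) < ((2 * m : ℕ) : ℝ) := by exact_mod_cast (by omega : 0 < 2 * m)
  have hN0 : ((2 * m : ℕ) : ℂ) ≠ 0 := by exact_mod_cast (by omega : 2 * m ≠ 0)
  refine ⟨Real.exp (Real.log ((2 * m : ℕ) : ℝ) / 2), Real.exp_pos _, ?_⟩
  rw [sum_range_cexp_sq_div m hm]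
  have h1 : -I / ((2 * m : ℕ) : ℂ) = -I * (((((2 * m : ℕ) : ℝ)⁻¹ : ℝ)) : ℂ) := by
    push_cast; rw [div_eq_mul_inv]
  rw [cpow_def_of_ne_zero (div_ne_zero (neg_ne_zero.2 I_ne_zero) hN0), h1,
    log_mul_ofReal _ (inv_pos.2 hN) _ (neg_ne_zero.2 I_ne_zero), log_neg_I, one_div,
    ← Complex.exp_neg, ofReal_exp, ← Complex.exp_add, Real.log_inv]
  congr 1
  push_cast
  ring

open Complex in
theorem sum_range_natAbs_cexp_sq_div (d : ℤ) (hd : d ≠ 0) (hd2 : Even d) :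
    ∃ R : ℝ, 0 < R ∧ ∑ k ∈ Finset.range d.natAbs, cexp (Real.pi * I * ((k : ℤ) : ℂ) ^ 2 / (d : ℂ)) =
      R * cexp (if 0 < d then Real.pi / 4 * I else -(Real.pi / 4 * I)) := by
  obtain ⟨e, rfl⟩ := hd2
  have he : 0 < e.natAbs := Int.natAbs_pos.2 (by omega)
  obtain ⟨R, hR, h⟩ := sum_range_cexp_sq_div_eq_ofReal_mul e.natAbs he
  refine ⟨R, hR, ?_⟩
  rcases lt_or_gt_of_ne (show e ≠ 0 by omega) with h0 | h0
  · rw [if_neg (by omega), show (e + e).natAbs = 2 * e.natAbs by omega]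
    have h2 := congrArg (starRingEnd ℂ) h
    rw [map_sum, map_mul, conj_ofReal, ← Complex.exp_conj] at h2
    convert h2 using 2
    · rw [← Complex.exp_conj]
      congr 1
      rw [show ((e + e : ℤ) : ℂ) = -((2 * e.natAbs : ℕ) : ℂ) by
        rw [← Int.cast_natCast, ← Int.cast_neg]; congr 1; omega]
      simp only [map_div₀, map_mul, map_pow, conj_ofReal, conj_I, conj_natCast, Int.cast_natCast]
      ring
    · simp only [map_mul, map_div₀, conj_ofReal, conj_I, map_ofNat, mul_neg]
  · rw [if_pos (by omega), show (e + e).natAbs = 2 * e.natAbs by omega,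
      show ((e + e : ℤ) : ℂ) = ((2 * e.natAbs : ℕ) : ℂ) by
        rw [← Int.cast_natCast]; congr 1; omega]
    simpa using h

theorem sum_range_add_of_periodic {n : ℕ} {f : ℤ → ℂ} (hf : ∀ k, f (k + n) = f k) (v : ℤ) :
    ∑ k ∈ Finset.range n, f (k + v) = ∑ k ∈ Finset.range n, f k := by
  have h1 : Function.Periodic (fun v : ℤ => ∑ k ∈ Finset.range n, f (k + v)) 1 := by
    intro v
    have e1 := Finset.sum_range_succ (fun k : ℕ => f (k + v)) n
    have e2 := Finset.sum_range_succ' (fun k : ℕ => f (k + v)) n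
    have e3 : f (n + v) = f ((0 : ℕ) + v) := by rw [add_comm, hf]; simp
    rw [e1, e3] at e2
    have e4 := add_right_cancel e2
    simp only [e4]
    refine Finset.sum_congr rfl fun k _ => ?_
    congr 1
    push_cast
    ring
  have h2 := h1.int_mul v 0
  simpa using h2

open Complex in
theorem sum_range_cexp_two_pi_mul_div (δ : ℤ) (hδ : δ ≠ 0) (c : ℤ) :
    ∑ h ∈ Finset.range δ.natAbs, cexp (2 * Real.pi * I * (c * (h : ℂ) / δ)) =
      if δ ∣ c then (δ.natAbs : ℂ) else 0 := by
  have hδC : (δ : ℂ) ≠ 0 := by exact_mod_cast hδ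
  have hπ : (2 * Real.pi * I : ℂ) ≠ 0 := by simp
  have hpow : ∀ h : ℕ, cexp (2 * Real.pi * I * (c * (h : ℂ) / δ)) =
      cexp (2 * Real.pi * I * (c / δ)) ^ h := by
    intro h
    rw [← Complex.exp_nat_mul]
    congr 1
    ring
  have hone : cexp (2 * Real.pi * I * (c / δ)) = 1 ↔ δ ∣ c := by
    rw [Complex.exp_eq_one_iff]
    constructor
    · rintro ⟨n, hn⟩
      rw [mul_comm (n : ℂ)] at hn
      have := mul_left_cancel₀ hπ hn
      rw [div_eq_iff hδC] at this
      exact ⟨n, by rw [mul_comm]; exact_mod_cast this⟩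
    · rintro ⟨n, rfl⟩
      refine ⟨n, ?_⟩
      push_cast
      field_simp
  simp only [hpow]
  split_ifs with hc
  · rw [hone.2 hc]; simp
  · have h1 := mul_geom_sum (cexp (2 * Real.pi * I * (c / δ))) δ.natAbs
    have h2 : cexp (2 * Real.pi * I * (c / δ)) ^ δ.natAbs = 1 := by
      rw [← Complex.exp_nat_mul, Complex.exp_eq_one_iff]
      refine ⟨δ.sign * c, ?_⟩
      have : ((δ.natAbs : ℕ) : ℂ) = δ.sign * δ := by
        rw [← Int.cast_natCast, ← Int.cast_mul, Int.sign_mul_self, Int.natCast_natAbs]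
      rw [this]
      push_cast
      field_simp
    rw [h2, sub_self] at h1
    exact (mul_eq_zero.1 h1).resolve_left (sub_ne_zero.2 fun h => hc (hone.1 h))

theorem even_dotProduct_mulVec {ι : Type*} [Fintype ι] [DecidableEq ι] {M : Matrix ι ι ℤ}
    (hM : M.IsSymm) (he : ∀ i, Even (M i i)) (x : ι → ℤ) : Even (x ⬝ᵥ M *ᵥ x) := by
  rw [← ZMod.intCast_eq_zero_iff_even]
  simp only [dotProduct, mulVec, Finset.mul_sum, Int.cast_sum]
  rw [← Finset.sum_product', Finset.univ_product_univ]
  refine Finset.sum_involution (fun q _ => q.swap) ?_ ?_ (by simp) (by simp)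
  · rintro ⟨i, j⟩ -
    rw [Prod.swap_prod_mk, ← Int.cast_add, ZMod.intCast_eq_zero_iff_even, hM.apply i j]
    exact ⟨x i * (M i j * x j), by ring⟩
  · rintro ⟨i, j⟩ - h h'
    apply h
    obtain rfl : j = i := by simpa using congrArg Prod.fst h'
    rw [ZMod.intCast_eq_zero_iff_even]
    exact ((he j).mul_right _).mul_left _

open Complex in
theorem prod_sum_range_cexp_sq_div_pos {ι : Type*} [Fintype ι] [DecidableEq ι]
    {M M' T : Matrix ι ι ℤ} (hM : M.IsSymm) (he : ∀ i, Even (M i i)) (hMM' : M * M' = 1)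
    (hT : T.det ≠ 0) {D : ι → ℤ} (hD : Tᵀ * M * T = diagonal D) (hD0 : ∀ i, D i ≠ 0) :
    ∃ R : ℝ, 0 < R ∧ ∏ i, ∑ k ∈ Finset.range (D i).natAbs,
      cexp (Real.pi * I * ((k : ℤ) : ℂ) ^ 2 / (D i : ℂ)) = R := by
  set A := Tᵀ * M with hA
  set δ := T.det with hδ
  have hδC : (δ : ℂ) ≠ 0 := by exact_mod_cast hT
  have hDC : ∀ i, (D i : ℂ) ≠ 0 := fun i => by exact_mod_cast hD0 i
  let f : ι → ℤ → ℂ := fun i k => cexp (Real.pi * I * (k : ℂ) ^ 2 / (D i : ℂ))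
  have hAD : δ • A = diagonal D * T.adjugate := by
    rw [← hD, Matrix.mul_assoc, mul_adjugate, Matrix.mul_smul, Matrix.mul_one]
  have hAh : ∀ (h : ι → ℤ) i, ((A *ᵥ h) i : ℂ) / D i = ((T.adjugate *ᵥ h) i : ℂ) / δ := by
    intro h i
    rw [div_eq_div_iff (hDC i) hδC]
    have := congrFun (congrArg (fun X : Matrix ι ι ℤ => X *ᵥ h) hAD) i
    simp only [smul_mulVec, Pi.smul_apply, smul_eq_mul, ← mulVec_mulVec, mulVec_diagonal] at this
    rw [mul_comm, ← Int.cast_mul, this, Int.cast_mul, mul_comm]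
  have hquad : ∀ h : ι → ℤ, ∑ i, ((A *ᵥ h) i : ℂ) ^ 2 / D i = (h ⬝ᵥ M *ᵥ h : ℤ) := by
    intro h
    have h1 : (T.adjugate *ᵥ h) ⬝ᵥ (A *ᵥ h) = δ * (h ⬝ᵥ M *ᵥ h) := by
      rw [hA, ← mulVec_mulVec, dotProduct_mulVec, vecMul_transpose, mulVec_mulVec, mul_adjugate,
        smul_mulVec, one_mulVec, smul_dotProduct, smul_eq_mul]
    have h2 : ∑ i, ((A *ᵥ h) i : ℂ) ^ 2 / D i =
        ((((T.adjugate *ᵥ h) ⬝ᵥ (A *ᵥ h) : ℤ)) : ℂ) / δ := by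
      rw [dotProduct, Int.cast_sum, Finset.sum_div]
      refine Finset.sum_congr rfl fun i _ => ?_
      rw [pow_two, mul_div_assoc, hAh]
      push_cast
      ring
    rw [h2, h1, div_eq_iff hδC]
    push_cast
    ring
  have hF1 : ∀ h : ι → ℤ, ∏ i, f i ((A *ᵥ h) i) = 1 := by
    intro h
    obtain ⟨n, hn⟩ := even_dotProduct_mulVec hM he h
    simp only [f]
    rw [← Complex.exp_sum, Complex.exp_eq_one_iff]
    refine ⟨n, ?_⟩
    have := hquad h
    rw [hn] at this
    simp only [mul_div_assoc]
    rw [← Finset.mul_sum, this]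
    push_cast
    ring
  have hper : ∀ i k, f i (k + ((D i).natAbs : ℕ)) = f i k := by
    intro i k
    obtain ⟨n, hn⟩ : Even (D i) := by
      have := even_dotProduct_mulVec hM he (T *ᵥ Pi.single i 1)
      have e : (Pi.single i 1) ⬝ᵥ (diagonal D *ᵥ (Pi.single i 1)) = D i := by simp
      rw [← e, ← hD, hA, ← mulVec_mulVec, ← mulVec_mulVec, dotProduct_mulVec, vecMul_transpose]
      exact this
    simp only [f]
    rw [Complex.exp_eq_exp_iff_exists_int]
    have hs : (((D i).natAbs : ℕ) : ℂ) = (D i).sign * D i := by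
      rw [← Int.cast_natCast, ← Int.cast_mul, Int.sign_mul_self, Int.natCast_natAbs]
    have hs2 : ((D i).sign : ℂ) ^ 2 = 1 := by
      rcases lt_or_gt_of_ne (hD0 i) with h | h
      · simp [Int.sign_eq_neg_one_of_neg h]
      · simp [Int.sign_eq_one_of_pos h]
    refine ⟨k * (D i).sign + n, ?_⟩
    have hn' : (D i : ℂ) = 2 * n := by rw [hn]; push_cast; ring
    rw [div_eq_iff (hDC i), add_mul, div_mul_cancel₀ _ (hDC i)]
    rw [Int.cast_add, Int.cast_natCast, hs]
    push_cast
    linear_combination (Real.pi : ℂ) * I * D i ^ 2 * hs2 + Real.pi * I * D i * hn'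
  let box := Fintype.piFinset fun i => Finset.range (D i).natAbs
  let hbox := Fintype.piFinset fun _ : ι => Finset.range δ.natAbs
  have hshift : ∀ h : ι → ℤ, ∏ i, ∑ k ∈ Finset.range (D i).natAbs, f i k =
      ∑ k ∈ box, (∏ i, f i (k i)) *
        cexp (2 * Real.pi * I * ((((fun i => (k i : ℤ)) ᵥ* T.adjugate) ⬝ᵥ h : ℤ) / δ)) := by
    intro h
    calc ∏ i, ∑ k ∈ Finset.range (D i).natAbs, f i k
        = ∏ i, ∑ k ∈ Finset.range (D i).natAbs, f i (k + (A *ᵥ h) i) :=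
          Finset.prod_congr rfl fun i _ => (sum_range_add_of_periodic (hper i) _).symm
      _ = ∑ k ∈ box, ∏ i, f i (k i + (A *ᵥ h) i) := Finset.prod_univ_sum _ _
      _ = _ := by
          refine Finset.sum_congr rfl fun k _ => ?_
          have h1 : ∀ i, f i (k i + (A *ᵥ h) i) = f i (k i) * f i ((A *ᵥ h) i) *
              cexp (2 * Real.pi * I * (k i * ((A *ᵥ h) i / D i))) := by
            intro i
            simp only [f]
            rw [← Complex.exp_add, ← Complex.exp_add]
            congr 1
            push_cast
            ring
          simp only [h1, Finset.prod_mul_distrib, hF1, mul_one]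
          congr 1
          rw [← Complex.exp_sum, ← Finset.mul_sum]
          congr 2
          simp only [hAh]
          rw [← dotProduct_mulVec, dotProduct, Int.cast_sum, Finset.sum_div]
          refine Finset.sum_congr rfl fun i _ => ?_
          push_cast
          ring
  have hinner : ∀ c : ι → ℤ,
      ∑ h ∈ hbox, cexp (2 * Real.pi * I * ((c ⬝ᵥ (fun i => (h i : ℤ)) : ℤ) / δ)) =
      if ∀ i, δ ∣ c i then (δ.natAbs : ℂ) ^ Fintype.card ι else 0 := by
    intro c
    have h1 : ∀ h : ι → ℕ, cexp (2 * Real.pi * I * ((c ⬝ᵥ (fun i => (h i : ℤ)) : ℤ) / δ)) =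
        ∏ i, cexp (2 * Real.pi * I * (c i * (h i : ℂ) / δ)) := by
      intro h
      rw [← Complex.exp_sum, ← Finset.mul_sum, dotProduct, Int.cast_sum, Finset.sum_div]
      push_cast
      rfl
    simp only [h1]
    rw [← Finset.prod_univ_sum (fun _ : ι => Finset.range δ.natAbs)
      (fun i (h : ℕ) => cexp (2 * Real.pi * I * (c i * (h : ℂ) / δ)))]
    simp only [sum_range_cexp_two_pi_mul_div δ hT]
    split_ifs with hc
    · simp [hc]
    · push Not at hc
      obtain ⟨i, hi⟩ := hc
      exact Finset.prod_eq_zero (Finset.mem_univ i) (if_neg hi)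
  have hone : ∀ k : ι → ℕ, (∀ i, δ ∣ ((fun i => (k i : ℤ)) ᵥ* T.adjugate) i) →
      ∏ i, f i (k i) = 1 := by
    intro k hk
    choose z hz using hk
    have hz' : (fun i => (k i : ℤ)) ᵥ* T.adjugate = δ • z := funext hz
    have h1 : (fun i => (k i : ℤ)) = z ᵥ* T := by
      have := congrArg (· ᵥ* T) hz'
      simp only [vecMul_vecMul, adjugate_mul, vecMul_smul, vecMul_one, smul_vecMul] at this
      exact smul_right_injective _ hT this
    have h2 : (fun i => (k i : ℤ)) = A *ᵥ (M' *ᵥ z) := by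
      rw [h1, hA, mulVec_mulVec, Matrix.mul_assoc, hMM', Matrix.mul_one, mulVec_transpose]
    have := hF1 (M' *ᵥ z)
    rw [← h2] at this
    exact this
  classical
  have hcard : (hbox.card : ℂ) = (δ.natAbs : ℂ) ^ Fintype.card ι := by
    simp [hbox]
  have hpow : (δ.natAbs : ℂ) ^ Fintype.card ι ≠ 0 := by
    refine pow_ne_zero _ ?_
    exact_mod_cast Int.natAbs_ne_zero.2 hT
  set S := ∏ i, ∑ k ∈ Finset.range (D i).natAbs, f i k with hS
  let good := box.filter fun k => ∀ i, δ ∣ ((fun i => (k i : ℤ)) ᵥ* T.adjugate) i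
  have hfinal : (δ.natAbs : ℂ) ^ Fintype.card ι * S =
      (δ.natAbs : ℂ) ^ Fintype.card ι * good.card := by
    calc (δ.natAbs : ℂ) ^ Fintype.card ι * S = ∑ h ∈ hbox, S := by
          rw [Finset.sum_const, nsmul_eq_mul, hcard]
      _ = ∑ h ∈ hbox, ∑ k ∈ box, (∏ i, f i (k i)) * cexp (2 * Real.pi * I *
            ((((fun i => (k i : ℤ)) ᵥ* T.adjugate) ⬝ᵥ (fun i => (h i : ℤ)) : ℤ) / δ)) :=
          Finset.sum_congr rfl fun h _ => hshift _
      _ = ∑ k ∈ box, (∏ i, f i (k i)) *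
            (if ∀ i, δ ∣ ((fun i => (k i : ℤ)) ᵥ* T.adjugate) i then
              (δ.natAbs : ℂ) ^ Fintype.card ι else 0) := by
          rw [Finset.sum_comm]
          refine Finset.sum_congr rfl fun k _ => ?_
          rw [← Finset.mul_sum, hinner]
      _ = ∑ k ∈ good, (δ.natAbs : ℂ) ^ Fintype.card ι := by
          rw [Finset.sum_filter]
          refine Finset.sum_congr rfl fun k _ => ?_
          split_ifs with hk
          · rw [hone k hk, one_mul]
          · rw [mul_zero]
      _ = _ := by rw [Finset.sum_const, nsmul_eq_mul, mul_comm]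
  refine ⟨good.card, ?_, by rw [mul_left_cancel₀ hpow hfinal]; simp⟩
  have : 0 < good.card := by
    refine Finset.card_pos.2 ⟨0, Finset.mem_filter.2 ⟨?_, ?_⟩⟩
    · simp [box, hD0]
    · intro i
      have : (fun i => (((0 : ι → ℕ) i : ℕ) : ℤ)) = 0 := by ext; simp
      rw [this, zero_vecMul]
      simp
  exact_mod_cast this

/-- Entry of a congruence transform as a value of the bilinear form. -/
theorem transpose_mul_mul_apply {R ι κ : Type*} [CommRing R] [Fintype ι] (M : Matrix ι ι R)
    (T : Matrix ι κ R) (i j : κ) : (Tᵀ * M * T) i j = T.col i ⬝ᵥ M *ᵥ T.col j := by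
  rw [Matrix.mul_assoc, Matrix.mul_apply]
  rfl

theorem exists_congr_diagonal {K : Type*} [Field K] (h2 : (2 : K) ≠ 0) {n : ℕ}
    {M : Matrix (Fin n) (Fin n) K} (hM : M.IsSymm) :
    ∃ P : Matrix (Fin n) (Fin n) K, P.det ≠ 0 ∧ ∃ d, Pᵀ * M * P = diagonal d := by
  have : Invertible (2 : K) := invertibleOfNonzero h2
  have hB : LinearMap.IsSymm (Matrix.toBilin' M) := by
    refine ⟨fun x y => ?_⟩
    simp only [Matrix.toBilin'_apply', RingHom.id_apply]
    rw [dotProduct_mulVec, ← mulVec_transpose, hM.eq, dotProduct_comm]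
  obtain ⟨v, hv⟩ := LinearMap.BilinForm.exists_orthogonal_basis hB
  have hn : Module.finrank K (Fin n → K) = n := by simp
  let b := v.reindex (finCongr hn)
  refine ⟨(Pi.basisFun K (Fin n)).toMatrix b, ?_, fun i => b i ⬝ᵥ M *ᵥ b i, ?_⟩
  · have h := Module.Basis.toMatrix_mul_toMatrix_flip (Pi.basisFun K (Fin n)) b
    intro h0
    have := congrArg det h
    rw [det_mul, h0, zero_mul, det_one] at this
    exact zero_ne_one this
  · ext i j
    rw [transpose_mul_mul_apply]
    have hcol : ∀ i, ((Pi.basisFun K (Fin n)).toMatrix b).col i = b i := by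
      intro i; ext k; simp [Module.Basis.toMatrix_apply]
    rw [hcol, hcol, diagonal_apply]
    split_ifs with hij
    · rw [hij]
    · have := hv (show (finCongr hn).symm i ≠ (finCongr hn).symm j by simpa using hij)
      simpa [b, Matrix.toBilin'_apply'] using this

theorem map_intCast_mul {R ι κ ν : Type*} [CommRing R] [Fintype κ] (A : Matrix ι κ ℤ)
    (B : Matrix κ ν ℤ) : (A * B).map (Int.cast : ℤ → R) =
      A.map (Int.cast : ℤ → R) * B.map (Int.cast : ℤ → R) :=
  Matrix.map_mul (f := Int.castRingHom R)

theorem exists_int_congr_diagonal {n : ℕ} {M : Matrix (Fin n) (Fin n) ℤ} (hM : M.IsSymm) :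
    ∃ T : Matrix (Fin n) (Fin n) ℤ, T.det ≠ 0 ∧ ∃ d, Tᵀ * M * T = diagonal d := by
  obtain ⟨P, hP, d, hd⟩ := exists_congr_diagonal (K := ℚ) two_ne_zero
    (M := M.map (Int.cast : ℤ → ℚ)) (hM.map _)
  obtain ⟨⟨c, hc⟩, hcP⟩ := IsLocalization.exist_integer_multiples_of_finite
    (nonZeroDivisors ℤ) (fun q : Fin n × Fin n => P q.1 q.2)
  have hc0 : c ≠ 0 := nonZeroDivisors.ne_zero hc
  choose T hT using fun i j => hcP (i, j)
  have hTP : (Matrix.of T).map (Int.cast : ℤ → ℚ) = (c : ℚ) • P := by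
    ext i j
    simpa using hT i j
  refine ⟨Matrix.of T, ?_, fun i => ((Matrix.of T)ᵀ * M * Matrix.of T) i i, ?_⟩
  · have h1 : (((Matrix.of T).det : ℤ) : ℚ) = (c : ℚ) ^ n * P.det := by
      have := (Int.castRingHom ℚ).map_det (Matrix.of T)
      simp only [RingHom.mapMatrix_apply, eq_intCast, Int.coe_castRingHom] at this
      rw [this, hTP, det_smul, Fintype.card_fin]
    intro h0
    rw [h0, Int.cast_zero] at h1
    exact mul_ne_zero (pow_ne_zero _ (by exact_mod_cast hc0)) hP h1.symm
  · have h1 : ((Matrix.of T)ᵀ * M * Matrix.of T).map (Int.cast : ℤ → ℚ) =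
        (c : ℚ) • (c : ℚ) • diagonal d := by
      rw [← hd, map_intCast_mul, map_intCast_mul, transpose_map, hTP]
      simp
    ext i j
    rw [diagonal_apply]
    split_ifs with hij
    · rw [hij]
    · have := congrFun (congrFun h1 i) j
      simpa [diagonal_apply_ne _ hij] using this

theorem intCast_det {ι : Type*} [Fintype ι] [DecidableEq ι] {R : Type*} [CommRing R]
    (M : Matrix ι ι ℤ) : (M.map (Int.cast : ℤ → R)).det = (M.det : R) := by
  have := (Int.castRingHom R).map_det M
  simpa [RingHom.mapMatrix_apply] using this.symm

theorem IsHyperbolicGram.det_sign {r : ℕ} (hr : 0 < r) {M : Matrix (Fin r) (Fin r) ℤ}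
    (h : IsHyperbolicGram M) : 0 < (-1) ^ (r - 1) * M.det := by
  obtain ⟨P, hP, h⟩ := h
  obtain ⟨k, rfl⟩ : ∃ k, r = k + 1 := ⟨r - 1, by omega⟩
  have h1 := congrArg det h
  rw [det_mul, det_mul, det_transpose, det_diagonal, intCast_det, Fin.prod_univ_succ] at h1
  simp only [Fin.val_zero, if_true, Fin.val_succ, Nat.succ_ne_zero, if_false, Finset.prod_const,
    Finset.card_univ, Fintype.card_fin, one_mul] at h1
  have h2 : ((-1 : ℝ) ^ k) * (-1) ^ k = 1 := by rw [← mul_pow]; simp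
  have h3 : (0 : ℝ) < P.det ^ 2 * ((-1) ^ k * M.det) := by
    have : P.det ^ 2 * ((-1) ^ k * M.det) = 1 := by linear_combination (-1) ^ k * h1 + h2
    rw [this]; exact one_pos
  have h4 := pos_of_mul_pos_right h3 (sq_nonneg _)
  rw [Nat.add_sub_cancel]
  exact_mod_cast h4

theorem IsHyperbolicGram.subsingleton_pos {r : ℕ} {M T : Matrix (Fin r) (Fin r) ℤ}
    (h : IsHyperbolicGram M) {D : Fin r → ℤ} (hD : Tᵀ * M * T = diagonal D) {i j : Fin r}
    (hi : 0 < D i) (hj : 0 < D j) : i = j := by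
  by_contra hij
  obtain ⟨P, hP, h⟩ := h
  obtain ⟨k, rfl⟩ : ∃ k, r = k + 1 := ⟨r - 1, by have := i.2; omega⟩
  set J : Fin (k + 1) → ℝ := fun i => if (i : ℕ) = 0 then 1 else -1 with hJ
  set Y : Matrix (Fin (k + 1)) (Fin (k + 1)) ℝ := P⁻¹ * T.map (Int.cast : ℤ → ℝ) with hY
  have hPY : P * Y = T.map (Int.cast : ℤ → ℝ) := by
    rw [hY, ← Matrix.mul_assoc, mul_nonsing_inv _ hP, Matrix.one_mul]
  have hDR : Yᵀ * diagonal J * Y = diagonal fun i => (D i : ℝ) := by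
    have h1 := congrArg (fun X : Matrix _ _ ℤ => X.map (Int.cast : ℤ → ℝ)) hD
    simp only [map_intCast_mul] at h1
    rw [transpose_map, ← hPY, diagonal_map (by simp), transpose_mul] at h1
    rw [← h, ← h1]
    simp only [Matrix.mul_assoc]
  have hval : ∀ α β : ℝ, α * Y 0 i + β * Y 0 j = 0 → α ^ 2 * D i + β ^ 2 * D j ≤ 0 := by
    intro α β h0
    have e : ∀ a b, Y.col a ⬝ᵥ diagonal J *ᵥ Y.col b = if a = b then (D a : ℝ) else 0 := by
      intro a b
      rw [← transpose_mul_mul_apply, hDR, diagonal_apply]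
    have h1 : (α • Y.col i + β • Y.col j) ⬝ᵥ diagonal J *ᵥ (α • Y.col i + β • Y.col j) =
        α ^ 2 * D i + β ^ 2 * D j := by
      simp only [mulVec_add, mulVec_smul, dotProduct_add, add_dotProduct, smul_dotProduct,
        dotProduct_smul, e, if_neg hij, if_neg (Ne.symm hij), if_true, smul_eq_mul]
      ring
    rw [← h1, dotProduct, Fin.sum_univ_succ]
    have h2 : (α • Y.col i + β • Y.col j) 0 = 0 := by simpa using h0
    rw [h2, zero_mul, zero_add]
    refine Finset.sum_nonpos fun l _ => ?_
    rw [mulVec_diagonal]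
    simp only [hJ, Fin.val_succ, Nat.succ_ne_zero, if_false]
    nlinarith [sq_nonneg ((α • Y.col i + β • Y.col j) l.succ)]
  have hiR : (0 : ℝ) < D i := by exact_mod_cast hi
  have hjR : (0 : ℝ) < D j := by exact_mod_cast hj
  have hyj : Y 0 j ≠ 0 := by
    intro h0
    have := hval 0 1 (by rw [h0]; ring)
    linarith
  have h1 := hval (Y 0 j) (-Y 0 i) (by ring)
  have h2 := mul_pos (sq_pos_of_ne_zero hyj) hiR
  have h3 := mul_nonneg (sq_nonneg (-Y 0 i)) hjR.le
  linarith

theorem IsHyperbolicGram.exists_unique_pos {r : ℕ} (hr : 0 < r) {M T : Matrix (Fin r) (Fin r) ℤ}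
    (h : IsHyperbolicGram M) (hT : T.det ≠ 0) {D : Fin r → ℤ} (hD : Tᵀ * M * T = diagonal D)
    (hD0 : ∀ i, D i ≠ 0) : ∃ i, 0 < D i ∧ ∀ j, j ≠ i → D j < 0 := by
  have key : ∃ i, 0 < D i := by
    by_contra! hneg
    have h1 := congrArg det hD
    rw [det_mul, det_mul, det_transpose, det_diagonal] at h1
    have h2 := h.det_sign hr
    have h3 : ∏ i, D i = (-1) ^ r * ∏ i, (-D i) := by
      rw [Finset.prod_neg, ← mul_assoc, Finset.card_univ, Fintype.card_fin, ← mul_pow]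
      simp
    have h4 : 0 < ∏ i, (-D i) :=
      Finset.prod_pos fun i _ => by have := hneg i; have := hD0 i; omega
    obtain ⟨k, rfl⟩ : ∃ k, r = k + 1 := ⟨r - 1, by omega⟩
    rw [Nat.add_sub_cancel] at h2
    have h5 : ((-1 : ℤ) ^ k) * (-1) ^ k = 1 := by rw [← mul_pow]; simp
    have h6 : T.det ^ 2 * ((-1) ^ k * M.det) = -∏ i, (-D i) := by
      rw [pow_succ] at h3
      linear_combination (-1) ^ k * h1 + (-1) ^ k * h3 - (∏ i, (-D i)) * h5
    have h7 := mul_pos (sq_pos_of_ne_zero hT) h2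
    linarith
  obtain ⟨i, hi⟩ := key
  refine ⟨i, hi, fun j hj => ?_⟩
  by_contra hj'
  exact hj (h.subsingleton_pos hD (lt_of_le_of_ne (not_lt.1 hj') (hD0 j).symm) hi)

open Complex in
theorem IsHyperbolicGram.mod_eight_of_unimodular {r : ℕ} (hr : 0 < r)
    {M M' : Matrix (Fin r) (Fin r) ℤ} (h : IsHyperbolicGram M) (hM : M.IsSymm)
    (he : ∀ i, Even (M i i)) (hMM' : M * M' = 1) : r % 8 = 2 := by
  obtain ⟨T, hT, D, hD⟩ := exists_int_congr_diagonal hM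
  have hdet : M.det ≠ 0 := by
    intro h0
    have := congrArg det hMM'
    rw [det_mul, h0, zero_mul, det_one] at this
    exact zero_ne_one this
  have hD0 : ∀ i, D i ≠ 0 := by
    have h1 := congrArg det hD
    rw [det_mul, det_mul, det_transpose, det_diagonal] at h1
    have h2 : ∏ i, D i ≠ 0 := by rw [← h1]; exact mul_ne_zero (mul_ne_zero hT hdet) hT
    intro i hi
    exact h2 (Finset.prod_eq_zero (Finset.mem_univ i) hi)
  have hDe : ∀ i, Even (D i) := by
    intro i
    have h1 : D i = T.col i ⬝ᵥ M *ᵥ T.col i := by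
      rw [← transpose_mul_mul_apply, hD, diagonal_apply_eq]
    rw [h1]
    exact even_dotProduct_mulVec hM he _
  obtain ⟨i₀, hpos, hneg⟩ := h.exists_unique_pos hr hT hD hD0
  choose R hR hRD using fun i => sum_range_natAbs_cexp_sq_div (D i) (hD0 i) (hDe i)
  obtain ⟨S, hS, hSD⟩ := prod_sum_range_cexp_sq_div_pos hM he hMM' hT hD hD0
  simp only [hRD] at hSD
  rw [Finset.prod_mul_distrib, ← Complex.exp_sum, ← Finset.add_sum_erase _ _ (Finset.mem_univ i₀),
    if_pos hpos, Finset.sum_congr rfl fun j hj =>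
      if_neg (not_lt.2 (hneg j (Finset.ne_of_mem_erase hj)).le), Finset.sum_const,
    Finset.card_erase_of_mem (Finset.mem_univ _), Finset.card_univ, Fintype.card_fin,
    nsmul_eq_mul, Nat.cast_sub (by omega : 1 ≤ r)] at hSD
  have hRpos : 0 < ∏ i, R i := Finset.prod_pos fun i _ => hR i
  have hexp : (Real.pi / 4 * I + ((r : ℂ) - (1 : ℕ)) * -(Real.pi / 4 * I) : ℂ) =
      (((2 - r : ℝ) * (Real.pi / 4) : ℝ) : ℂ) * I := by push_cast; ring
  rw [hexp] at hSD
  have hnorm := congrArg norm hSD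
  rw [norm_mul, norm_exp_ofReal_mul_I, mul_one, ← ofReal_prod, Complex.norm_of_nonneg hRpos.le,
    Complex.norm_of_nonneg hS.le] at hnorm
  rw [← ofReal_prod, hnorm] at hSD
  have hS0 : (S : ℂ) ≠ 0 := by exact_mod_cast hS.ne'
  have hone := mul_left_cancel₀ hS0 (hSD.trans (mul_one _).symm)
  obtain ⟨n, hn⟩ := Complex.exp_eq_one_iff.1 hone
  have hn' : ((2 - r : ℝ) * (Real.pi / 4)) = n * (2 * Real.pi) := by
    have h1 : ((((2 - r : ℝ) * (Real.pi / 4)) : ℝ) : ℂ) * I = ((n * (2 * Real.pi) : ℝ) : ℂ) * I := by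
      rw [hn]; push_cast; ring
    exact_mod_cast mul_right_cancel₀ I_ne_zero h1
  have h2 : (2 - r : ℝ) = 8 * n := by
    have := Real.pi_pos.ne'
    field_simp at hn'
    linarith
  have h3 : (2 - r : ℤ) = 8 * n := by exact_mod_cast h2
  omega

theorem exists_sum_equiv_of_ne.{u} {ι : Type u} [Fintype ι] {i j : ι} (hij : i ≠ j) :
    ∃ (κ : Type u) (_ : Fintype κ) (_ : DecidableEq κ) (e : Fin 2 ⊕ κ ≃ ι),
      e (Sum.inl 0) = i ∧ e (Sum.inl 1) = j := by
  classical
  have hf : Function.Injective ![i, j] := by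
    intro a b
    fin_cases a <;> fin_cases b <;> simp [hij, hij.symm]
  exact ⟨↥(Set.range ![i, j])ᶜ, inferInstance, inferInstance,
    ((Equiv.ofInjective _ hf).sumCongr (Equiv.refl _)).trans (Equiv.Set.sumCompl _), rfl, rfl⟩

/-- The Schur complement of a block `B`, cleared of denominators. -/
theorem det_pow_mul_det_fromBlocks {R κ ν : Type*} [CommRing R] [Fintype κ] [Fintype ν]
    [DecidableEq κ] [DecidableEq ν] (B : Matrix κ κ R) (X : Matrix κ ν R) (Y : Matrix ν κ R)
    (D : Matrix ν ν R) : B.det ^ Fintype.card ν * (fromBlocks B X Y D).det =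
      B.det * (B.det • D - Y * B.adjugate * X).det := by
  have h1 : fromBlocks 1 0 (-(Y * B.adjugate)) (B.det • (1 : Matrix ν ν R)) * fromBlocks B X Y D =
      fromBlocks B X 0 (B.det • D - Y * B.adjugate * X) := by
    rw [fromBlocks_multiply]
    congr 1
    · simp
    · simp
    · rw [Matrix.neg_mul, Matrix.mul_assoc, adjugate_mul]; simp
    · simp [sub_eq_neg_add]
  have h2 := congrArg det h1
  rw [det_mul, det_fromBlocks_zero₁₂, det_fromBlocks_zero₂₁, det_smul, det_one, det_one, one_mul,
    mul_one] at h2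
  exact h2

theorem even_card_and_det_mod_four (n : ℕ) : ∀ {ι : Type} [Fintype ι] [DecidableEq ι]
    {M : Matrix ι ι ℤ}, Fintype.card ι = n → M.IsSymm → (∀ i, Even (M i i)) → Odd M.det →
      Even n ∧ (-1) ^ (n / 2) * (M.det : ZMod 4) = 1 := by
  induction n using Nat.strong_induction_on with
  | _ n ih =>
  intro ι _ _ M hn hM he hodd
  rcases Nat.eq_zero_or_pos n with rfl | hpos
  · have := Fintype.card_eq_zero_iff.1 hn
    simp
  obtain ⟨i, j, hijo⟩ : ∃ i j, Odd (M i j) := by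
    by_contra! hev
    have h0 : M.map (Int.cast : ℤ → ZMod 2) = 0 := by
      ext i j
      simpa [ZMod.intCast_eq_zero_iff_even] using hev i j
    have h1 := intCast_det (R := ZMod 2) M
    have : Nonempty ι := Fintype.card_pos_iff.1 (hn ▸ hpos)
    rw [h0, det_zero, eq_comm, ZMod.intCast_eq_zero_iff_even] at h1
    exact Int.not_even_iff_odd.2 hodd h1
  have hij : i ≠ j := by
    rintro rfl
    exact Int.not_even_iff_odd.2 hijo (he i)
  obtain ⟨κ, _, _, e, rfl, rfl⟩ := exists_sum_equiv_of_ne hij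
  set M₁ := M.submatrix e e with hM₁
  have hM₁s : M₁.IsSymm := hM.submatrix e
  set B := M₁.toBlocks₁₁ with hB
  have hBs : B.IsSymm := by ext a b; exact hM₁s.apply _ _
  have hY : M₁.toBlocks₂₁ = M₁.toBlocks₁₂ᵀ := by ext a b; exact hM₁s.apply _ _
  have hDs : M₁.toBlocks₂₂.IsSymm := by ext a b; exact hM₁s.apply _ _
  have hcard : n = Fintype.card κ + 2 := by
    rw [← hn, ← Fintype.card_congr e, Fintype.card_sum, Fintype.card_fin, add_comm]
  have hdet := det_pow_mul_det_fromBlocks B M₁.toBlocks₁₂ M₁.toBlocks₂₁ M₁.toBlocks₂₂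
  rw [fromBlocks_toBlocks, hM₁, det_submatrix_equiv_self, ← hM₁, hY] at hdet
  obtain ⟨u, hu⟩ := he (e (Sum.inl 0))
  obtain ⟨v, hv⟩ := he (e (Sum.inl 1))
  obtain ⟨w, hw⟩ := hijo
  have hβ : B.det = 4 * (u * v - w ^ 2 - w) - 1 := by
    rw [det_fin_two]
    have h01 : B 1 0 = B 0 1 := hBs.apply 0 1
    rw [h01, show B 0 0 = u + u from hu, show B 1 1 = v + v from hv, show B 0 1 = 2 * w + 1 from hw]
    ring
  have hβ4 : (B.det : ZMod 4) = -1 := by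
    rw [hβ]; push_cast; rw [show (4 : ZMod 4) = 0 from rfl]; ring
  have hβo : Odd B.det := ⟨2 * (u * v - w ^ 2 - w) - 1, by rw [hβ]; ring⟩
  have hadj : B.adjugate.IsSymm := by
    rw [Matrix.IsSymm, adjugate_transpose, hBs.eq]
  have hade : ∀ a, Even (B.adjugate a a) := by
    intro a
    rw [adjugate_fin_two]
    fin_cases a
    · exact he _
    · exact he _
  set M₂ := B.det • M₁.toBlocks₂₂ - M₁.toBlocks₁₂ᵀ * B.adjugate * M₁.toBlocks₁₂ with hM₂
  have hM₂s : M₂.IsSymm := by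
    rw [Matrix.IsSymm, hM₂, transpose_sub, transpose_smul, hDs.eq, transpose_mul, transpose_mul,
      hadj.eq, transpose_transpose, Matrix.mul_assoc]
  have hM₂e : ∀ k, Even (M₂ k k) := by
    intro k
    rw [hM₂, Matrix.sub_apply, transpose_mul_mul_apply]
    exact Even.sub ((he _).mul_left _) (even_dotProduct_mulVec hadj hade _)
  have hM₂o : Odd M₂.det := by
    have h1 : Odd (B.det ^ Fintype.card κ * M.det) := (hβo.pow).mul hodd
    rw [hdet] at h1
    exact (Int.odd_mul.1 h1).2
  obtain ⟨hev, hdet₂⟩ := ih (Fintype.card κ) (by omega) rfl hM₂s hM₂e hM₂o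
  have hdet4 := congrArg (Int.cast : ℤ → ZMod 4) hdet
  simp only [Int.cast_mul, Int.cast_pow] at hdet4
  rw [hβ4, hev.neg_one_pow, one_mul] at hdet4
  refine ⟨hcard ▸ hev.add even_two, ?_⟩
  rw [hcard, Nat.add_div_right _ two_pos, pow_succ, hdet4]
  linear_combination hdet₂

theorem natCard_cokernel_mulVecLin {r : ℕ} {M : Matrix (Fin r) (Fin r) ℤ} (hM : M.det ≠ 0) :
    Nat.card ((Fin r → ℤ) ⧸ LinearMap.range M.mulVecLin) = M.det.natAbs := by
  have hinj : Function.Injective M.mulVecLin := mulVec_injective_of_det_ne_zero hM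
  rw [← Submodule.natAbs_det_equiv _ (LinearEquiv.ofInjective _ hinj)]
  congr 1
  rw [← LinearMap.det_toLin']
  rfl

theorem forall_smul_mem_range_iff {r : ℕ} {M : Matrix (Fin r) (Fin r) ℤ} (p : ℤ) :
    (∀ x, p • x ∈ LinearMap.range M.mulVecLin) ↔
      ∃ N : Matrix (Fin r) (Fin r) ℤ, M * N = p • (1 : Matrix (Fin r) (Fin r) ℤ) := by
  constructor
  · intro h
    choose f hf using fun i => h (Pi.single i 1)
    refine ⟨(Matrix.of f)ᵀ, ?_⟩
    ext i j
    have := congrFun (hf j) i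
    rw [mulVecLin_apply] at this
    rw [Matrix.mul_apply, Matrix.smul_apply]
    simp only [mulVec, dotProduct, Pi.smul_apply] at this
    simpa [Matrix.one_apply, Pi.single_apply] using this
  · rintro ⟨N, hN⟩ x
    refine ⟨N *ᵥ x, ?_⟩
    rw [mulVecLin_apply, mulVec_mulVec, hN, smul_mulVec, one_mulVec]

theorem nonempty_linearEquiv_fun_zmod {p a : ℕ} [Fact p.Prime] {G : Type*} [AddCommGroup G]
    (hG : ∀ x : G, p • x = 0) (hcard : Nat.card G = p ^ a) :
    Nonempty (G ≃ₗ[ℤ] (Fin a → ZMod p)) := by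
  obtain ⟨_⟩ : Nonempty (Module (ZMod p) G) := ⟨AddCommGroup.zmodModule hG⟩
  have : Finite G := Nat.finite_of_card_ne_zero (by
    rw [hcard]; exact pow_ne_zero _ (NeZero.ne p))
  have : Module.Finite (ZMod p) G := Module.Finite.of_finite
  have h1 := (FiniteField.pow_finrank_eq_natCard p G).trans hcard
  have h2 : Module.finrank (ZMod p) G = Module.finrank (ZMod p) (Fin a → ZMod p) := by
    rw [Nat.pow_right_injective (Fact.out : p.Prime).two_le h1]
    simp
  obtain ⟨e⟩ := FiniteDimensional.nonempty_linearEquiv_of_finrank_eq h2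
  exact ⟨e.toAddEquiv.toIntLinearEquiv⟩

theorem elemOfLength_iff {p : ℕ} (hp : p.Prime) {r a : ℕ} {M : Matrix (Fin r) (Fin r) ℤ}
    (hM : M.det ≠ 0) : ElemOfLength p a M ↔
      (∃ N : Matrix (Fin r) (Fin r) ℤ, M * N = (p : ℤ) • (1 : Matrix (Fin r) (Fin r) ℤ)) ∧
        M.det.natAbs = p ^ a := by
  have : Fact p.Prime := ⟨hp⟩
  rw [← forall_smul_mem_range_iff, ← natCard_cokernel_mulVecLin hM]
  constructor
  · rintro ⟨e⟩
    refine ⟨fun x => ?_, ?_⟩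
    · rw [← Submodule.Quotient.mk_eq_zero, Submodule.Quotient.mk_smul]
      apply e.injective
      rw [map_smul, map_zero]
      ext i
      simp
    · rw [Nat.card_congr e.toEquiv]
      simp
  · rintro ⟨h, hcard⟩
    refine nonempty_linearEquiv_fun_zmod (fun x => ?_) hcard
    induction x using Submodule.Quotient.induction_on with
    | _ x =>
      rw [← natCast_zsmul, ← Submodule.Quotient.mk_smul, Submodule.Quotient.mk_eq_zero]
      exact h x

theorem le_of_mul_eq_smul_one {p : ℕ} (hp : p.Prime) {r a : ℕ} {M N : Matrix (Fin r) (Fin r) ℤ}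
    (hN : M * N = (p : ℤ) • (1 : Matrix (Fin r) (Fin r) ℤ)) (hM : M.det.natAbs = p ^ a) :
    a ≤ r := by
  have h1 := congrArg (fun X => (det X).natAbs) hN
  simp only [det_mul, det_smul, det_one, Int.natAbs_mul, Int.natAbs_pow, hM, Fintype.card_fin,
    Int.natAbs_natCast, mul_one] at h1
  exact (Nat.pow_dvd_pow_iff_le_right hp.one_lt).1 ⟨_, h1.symm⟩

theorem isHyperbolicGram_smul_iff {r : ℕ} {M : Matrix (Fin r) (Fin r) ℤ} {c : ℤ} (hc : 0 < c) :
    IsHyperbolicGram (c • M) ↔ IsHyperbolicGram M := by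
  have hcR : (0 : ℝ) < c := by exact_mod_cast hc
  have hs : Real.sqrt c * Real.sqrt c = c := Real.mul_self_sqrt hcR.le
  have hs0 : Real.sqrt c ≠ 0 := (Real.sqrt_pos.2 hcR).ne'
  have hmap : (c • M).map (Int.cast : ℤ → ℝ) = (c : ℝ) • M.map (Int.cast : ℤ → ℝ) := by
    ext i j; simp [-zsmul_eq_mul, Matrix.smul_apply, smul_eq_mul]
  rw [IsHyperbolicGram, IsHyperbolicGram, hmap]
  constructor
  · rintro ⟨P, hP, h⟩
    refine ⟨Real.sqrt c • P, ?_, ?_⟩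
    · rw [det_smul]
      exact (isUnit_iff_ne_zero.2 (pow_ne_zero _ hs0)).mul hP
    · rw [← h]
      simp only [transpose_smul, Matrix.smul_mul, Matrix.mul_smul, smul_smul, hs]
  · rintro ⟨P, hP, h⟩
    refine ⟨(Real.sqrt c)⁻¹ • P, ?_, ?_⟩
    · rw [det_smul]
      exact (isUnit_iff_ne_zero.2 (pow_ne_zero _ (inv_ne_zero hs0))).mul hP
    · rw [← h]
      simp only [transpose_smul, Matrix.smul_mul, Matrix.mul_smul, smul_smul]
      rw [show (Real.sqrt c)⁻¹ * (c * (Real.sqrt c)⁻¹) = 1 by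
        field_simp; rw [pow_two, hs], one_smul]

theorem conditions_of_isHyperbolicGram {p : ℕ} (hp : p.Prime) (hodd : Odd p) {r a : ℕ}
    (hr : 2 ≤ r) {M N : Matrix (Fin r) (Fin r) ℤ} (hM : M.IsSymm) (he : ∀ i, Even (M i i))
    (hhyp : IsHyperbolicGram M) (hN : M * N = (p : ℤ) • (1 : Matrix (Fin r) (Fin r) ℤ))
    (hdet : M.det.natAbs = p ^ a) :
    a ≤ r ∧ r % 2 = 0 ∧ (a % 2 = 0 → r % 4 = 2) ∧
      (a % 2 = 1 → (p : ℤ) ≡ (-1) ^ (r / 2 - 1) [ZMOD 4]) ∧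
      (r % 8 ≠ 2 → (0 < a ∧ a < r)) := by
  have hp0 : (0 : ℤ) < p := by exact_mod_cast hp.pos
  have har : a ≤ r := le_of_mul_eq_smul_one hp hN hdet
  have hdodd : Odd M.det := by rw [← Int.natAbs_odd, hdet]; exact hodd.pow
  obtain ⟨hreven, hmod⟩ := even_card_and_det_mod_four r (Fintype.card_fin r) hM he hdodd
  have hsign := hhyp.det_sign (by omega)
  have hneg : M.det = -(p : ℤ) ^ a := by
    rw [Odd.neg_one_pow (Nat.Even.sub_odd (by omega) hreven odd_one)] at hsign
    have : (M.det.natAbs : ℤ) = (p : ℤ) ^ a := by rw [hdet]; push_cast; rfl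
    omega
  have hpow : (-1) ^ (r / 2 - 1) * (p : ZMod 4) ^ a = 1 := by
    rw [hneg, show r / 2 = (r / 2 - 1) + 1 by omega, pow_succ] at hmod
    push_cast at hmod
    linear_combination hmod
  have hp2 : (p : ZMod 4) ^ 2 = 1 := by
    obtain ⟨k, rfl⟩ := hodd
    have : (4 : ZMod 4) = 0 := rfl
    push_cast
    linear_combination ((k : ZMod 4) ^ 2 + k) * this
  refine ⟨har, Nat.even_iff.1 hreven, fun ha => ?_, fun ha => ?_, fun h8 => ⟨?_, ?_⟩⟩
  · obtain ⟨b, hb⟩ := Nat.even_iff.2 ha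
    rw [hb, ← two_mul, pow_mul, hp2, one_pow, mul_one] at hpow
    have : Even (r / 2 - 1) := by
      by_contra hne
      rw [(Nat.not_even_iff_odd.1 hne).neg_one_pow] at hpow
      exact absurd hpow (by decide)
    obtain ⟨c, hc⟩ := this
    obtain ⟨d, hd⟩ := hreven
    omega
  · obtain ⟨b, hb⟩ := Nat.odd_iff.2 ha
    rw [hb, pow_succ, pow_mul, hp2, one_pow, one_mul] at hpow
    refine (ZMod.intCast_eq_intCast_iff _ _ 4).1 ?_
    push_cast
    have h1 : ((-1 : ZMod 4) ^ (r / 2 - 1)) * (-1) ^ (r / 2 - 1) = 1 := by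
      rw [← mul_pow]; simp
    linear_combination (-1) ^ (r / 2 - 1) * hpow - (p : ZMod 4) * h1
  · by_contra ha
    obtain rfl : a = 0 := by omega
    rw [pow_zero] at hneg
    have hu : IsUnit M.det := by rw [hneg]; exact isUnit_one.neg
    exact h8 (hhyp.mod_eight_of_unimodular (by omega) hM he (mul_nonsing_inv M hu))
  · by_contra ha
    obtain rfl : a = r := by omega
    have hNu : IsUnit N.det := by
      have h1 := congrArg det hN
      rw [det_mul, det_smul, det_one, mul_one, hneg, Fintype.card_fin] at h1
      have h2 : N.det = -1 := by
        refine mul_left_cancel₀ (pow_ne_zero a hp0.ne') ?_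
        linear_combination -h1
      rw [h2]; exact isUnit_one.neg
    have hM0 : M = (p : ℤ) • N⁻¹ := by
      rw [← Matrix.one_mul N⁻¹, ← Matrix.smul_mul, ← hN, Matrix.mul_assoc, mul_nonsing_inv _ hNu,
        Matrix.mul_one]
    have hs : (N⁻¹).IsSymm := by
      have h1 := hM.eq
      rw [hM0, transpose_smul] at h1
      exact smul_right_injective _ hp0.ne' h1
    have hpo : ¬Even (p : ℤ) := by
      rw [Int.even_coe_nat]; exact Nat.not_even_iff_odd.2 hodd
    have he0 : ∀ i, Even (N⁻¹ i i) := by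
      intro i
      have h1 := he i
      rw [hM0, Matrix.smul_apply, smul_eq_mul, Int.even_mul] at h1
      exact h1.resolve_left hpo
    rw [hM0, isHyperbolicGram_smul_iff hp0] at hhyp
    exact h8 (hhyp.mod_eight_of_unimodular (by omega) hs he0 (nonsing_inv_mul N hNu))

theorem IsHyperbolicGram.congr {r : ℕ} {M T : Matrix (Fin r) (Fin r) ℤ} (h : IsHyperbolicGram M)
    (hT : T.det ≠ 0) : IsHyperbolicGram (Tᵀ * M * T) := by
  obtain ⟨P, hP, h⟩ := h
  have hTu : IsUnit (T.map (Int.cast : ℤ → ℝ)).det := by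
    rw [intCast_det, isUnit_iff_ne_zero]; exact_mod_cast hT
  refine ⟨(T.map (Int.cast : ℤ → ℝ))⁻¹ * P, ?_, ?_⟩
  · rw [det_mul]
    exact (isUnit_nonsing_inv_det _ hTu).mul hP
  · rw [← h, map_intCast_mul, map_intCast_mul, transpose_map, transpose_mul,
      transpose_nonsing_inv]
    have h1 : ((T.map (Int.cast : ℤ → ℝ))ᵀ)⁻¹ * (T.map (Int.cast : ℤ → ℝ))ᵀ = 1 :=
      nonsing_inv_mul _ (by rwa [det_transpose])
    have h2 := mul_nonsing_inv _ hTu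
    set S := T.map (Int.cast : ℤ → ℝ)
    calc Pᵀ * Sᵀ⁻¹ * (Sᵀ * M.map (Int.cast : ℤ → ℝ) * S) * (S⁻¹ * P)
        = Pᵀ * (Sᵀ⁻¹ * Sᵀ) * M.map (Int.cast : ℤ → ℝ) * (S * S⁻¹) * P := by
          simp only [Matrix.mul_assoc]
      _ = _ := by rw [h1, h2, Matrix.mul_one, Matrix.mul_one]

theorem pow_card_dvd_det {ι : Type*} [Fintype ι] [DecidableEq ι] (A : Matrix ι ι ℤ) (p : ℤ)
    (S : Finset ι) (h : ∀ i, ∀ j ∈ S, p ∣ A i j) : p ^ S.card ∣ A.det := by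
  have h1 : ∀ i j, ∃ b, A i j = b * if j ∈ S then p else 1 := by
    intro i j
    split_ifs with hj
    · obtain ⟨b, hb⟩ := h i j hj
      exact ⟨b, by rw [hb, mul_comm]⟩
    · exact ⟨A i j, by simp⟩
  choose B hB using h1
  have h2 : A = Matrix.of B * diagonal fun j => if j ∈ S then p else 1 := by
    ext i j
    rw [mul_diagonal, of_apply, ← hB]
  rw [h2, det_mul, det_diagonal, Finset.prod_ite_mem, Finset.univ_inter, Finset.prod_const]
  exact dvd_mul_left _ _

theorem exists_isotropic {K : Type*} [Field K] [Fintype K] (h2 : (2 : K) ≠ 0) {a b c : K}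
    (ha : a ≠ 0) (hb : b ≠ 0) : ∃ x y : K, a * x ^ 2 + b * y ^ 2 + c = 0 := by
  obtain ⟨x, y, h⟩ := FiniteField.exists_root_sum_quadratic (R := K)
    (f := Polynomial.C a * Polynomial.X ^ 2)
    (g := Polynomial.C b * Polynomial.X ^ 2 + Polynomial.C c)
    (by rw [Polynomial.degree_C_mul_X_pow _ ha]; rfl)
    (by
      rw [Polynomial.degree_add_C (by rw [Polynomial.degree_C_mul_X_pow _ hb]; norm_num),
        Polynomial.degree_C_mul_X_pow _ hb]; rfl)
    (FiniteField.odd_card_of_char_ne_two fun h => h2 (by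
      have := CharP.cast_eq_zero K (ringChar K)
      rw [h] at this
      exact_mod_cast this))
  refine ⟨x, y, ?_⟩
  simp at h
  linear_combination h

theorem exists_isotropic_vector {p : ℕ} (hp : p.Prime) (hodd : Odd p) {r a : ℕ}
    (har : a + 3 ≤ r) {M : Matrix (Fin r) (Fin r) ℤ} (hM : M.IsSymm)
    (hdet : M.det.natAbs = p ^ a) :
    ∃ (v : Fin r → ℤ) (j : Fin r), (p : ℤ) ∣ v ⬝ᵥ M *ᵥ v ∧ (p : ℤ) ∣ (M *ᵥ v) j - 1 := by
  have : Fact p.Prime := ⟨hp⟩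
  have h2 : (2 : ZMod p) ≠ 0 := by
    intro h
    have : p ∣ 2 := (ZMod.natCast_eq_zero_iff 2 p).1 (by exact_mod_cast h)
    rw [(Nat.prime_dvd_prime_iff_eq hp Nat.prime_two).1 this] at hodd
    exact absurd hodd (by decide)
  set M' := M.map (Int.cast : ℤ → ZMod p) with hM'
  have hlift : ∀ {ι κ : Type} (P : Matrix ι κ (ZMod p)),
      ∃ Q : Matrix ι κ ℤ, Q.map (Int.cast : ℤ → ZMod p) = P := by
    intro ι κ P
    choose Q hQ using fun i j => ZMod.intCast_surjective (P i j)
    exact ⟨Matrix.of Q, by ext i j; exact hQ i j⟩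
  obtain ⟨P, hP, d, hd⟩ := exists_congr_diagonal h2 (hM.map (Int.cast : ℤ → ZMod p))
  rw [← hM'] at hd
  let S := Finset.univ.filter fun i => d i = 0
  have hS : S.card ≤ a := by
    obtain ⟨Q, hQ⟩ := hlift P
    have h1 : (Qᵀ * M * Q).map (Int.cast : ℤ → ZMod p) = diagonal d := by
      rw [map_intCast_mul, map_intCast_mul, transpose_map, hQ, hd]
    have h3 := pow_card_dvd_det (Qᵀ * M * Q) p S fun i j hj => by
      rw [← ZMod.intCast_zmod_eq_zero_iff_dvd]
      have := congrFun (congrFun h1 i) j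
      rw [map_apply] at this
      rw [this, diagonal_apply]
      split_ifs with hij
      · rw [hij]; exact (Finset.mem_filter.1 hj).2
      · rfl
    have hQp : ¬(p : ℤ) ∣ Q.det := by
      rw [← ZMod.intCast_zmod_eq_zero_iff_dvd, ← intCast_det, hQ]
      exact hP
    have hcop : IsCoprime ((p : ℤ) ^ S.card) Q.det :=
      ((Prime.coprime_iff_not_dvd (Nat.prime_iff_prime_int.1 hp)).2 hQp).pow_left
    rw [det_mul, det_mul, det_transpose] at h3
    have h4 := hcop.dvd_of_dvd_mul_left (hcop.dvd_of_dvd_mul_right h3)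
    have h5 := Int.natAbs_dvd_natAbs.2 h4
    rw [hdet, Int.natAbs_pow, Int.natAbs_natCast] at h5
    exact (Nat.pow_dvd_pow_iff_le_right hp.one_lt).1 h5
  have h3 : 2 < Sᶜ.card := by
    rw [Finset.card_compl, Fintype.card_fin]; omega
  obtain ⟨i, k, l, hi, hk, hl, hik, hil, hkl⟩ := Finset.two_lt_card_iff.1 h3
  have hne : ∀ {i}, i ∈ Sᶜ → d i ≠ 0 := by
    intro i hi; simpa [S] using hi
  obtain ⟨x, y, hxy⟩ := exists_isotropic (c := d l) h2 (hne hi) (hne hk)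
  set u : Fin r → ZMod p := x • Pi.single i 1 + y • Pi.single k 1 + Pi.single l 1 with hu
  have hquad : u ⬝ᵥ diagonal d *ᵥ u = 0 := by
    rw [← hxy, hu]
    simp [mulVec_add, mulVec_smul, dotProduct_add, hik, hil, hkl,
      hik.symm, hil.symm, hkl.symm]
    ring
  have hw : M' *ᵥ (P *ᵥ u) ≠ 0 := by
    intro h0
    have h1 := congrArg (fun X : Matrix _ _ (ZMod p) => (X *ᵥ u) l) hd
    simp only [← mulVec_mulVec, h0, mulVec_zero, mulVec_diagonal, Pi.zero_apply] at h1
    refine hne hl ?_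
    rw [h1, hu]
    simp [hil.symm, hkl.symm]
  obtain ⟨j, hj⟩ := Function.ne_iff.1 hw
  set s := (M' *ᵥ (P *ᵥ u)) j with hs
  choose v hv using fun i => ZMod.intCast_surjective ((s⁻¹ • (P *ᵥ u)) i)
  have hv' : (fun i => (v i : ZMod p)) = s⁻¹ • (P *ᵥ u) := funext hv
  have hcast : ∀ i, (((M *ᵥ v) i : ℤ) : ZMod p) = (M' *ᵥ fun i => (v i : ZMod p)) i := by
    intro i
    simp [mulVec, dotProduct, hM']
  refine ⟨v, j, ?_, ?_⟩
  · rw [← ZMod.intCast_zmod_eq_zero_iff_dvd, dotProduct, Int.cast_sum]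
    simp only [Int.cast_mul, hcast]
    change (fun i => (v i : ZMod p)) ⬝ᵥ (M' *ᵥ fun i => (v i : ZMod p)) = 0
    rw [hv', mulVec_smul, dotProduct_smul, smul_dotProduct]
    have : P *ᵥ u ⬝ᵥ M' *ᵥ P *ᵥ u = 0 := by
      rw [← hquad, ← hd, ← mulVec_mulVec, ← mulVec_mulVec, dotProduct_mulVec u, vecMul_transpose]
    rw [this, smul_zero, smul_zero]
  · rw [← ZMod.intCast_zmod_eq_zero_iff_dvd, Int.cast_sub, hcast, hv', mulVec_smul, Pi.smul_apply,
      ← hs, smul_eq_mul, inv_mul_cancel₀ hj]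
    simp

/-- There is an even hyperbolic Gram matrix of rank `r` whose cokernel is killed by `p` and has
order `p ^ a`. -/
def ExistsHyperbolicElementary (p r a : ℕ) : Prop :=
  ∃ M N : Matrix (Fin r) (Fin r) ℤ, M.IsSymm ∧ (∀ i, Even (M i i)) ∧ IsHyperbolicGram M ∧
    M * N = (p : ℤ) • (1 : Matrix (Fin r) (Fin r) ℤ) ∧ M.det.natAbs = p ^ a

theorem ExistsHyperbolicElementary.scale {p r : ℕ} (hp : 0 < p)
    (h : ExistsHyperbolicElementary p r 0) : ExistsHyperbolicElementary p r r := by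
  obtain ⟨M, N, hM, he, hh, -, hdet⟩ := h
  have hp0 : (0 : ℤ) < p := by exact_mod_cast hp
  have hu : IsUnit M.det := Int.isUnit_iff_natAbs_eq.2 (by simpa using hdet)
  refine ⟨(p : ℤ) • M, M⁻¹, ?_, fun i => (he i).mul_left _, (isHyperbolicGram_smul_iff hp0).2 hh,
    ?_, ?_⟩
  · rw [Matrix.IsSymm, transpose_smul, hM.eq]
  · rw [Matrix.smul_mul, mul_nonsing_inv _ hu]
  · rw [det_smul, Int.natAbs_mul, hdet, Int.natAbs_pow, Fintype.card_fin]
    simp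

theorem ExistsHyperbolicElementary.step {p : ℕ} (hp : p.Prime) (hodd : Odd p) {r a : ℕ}
    (har : a + 3 ≤ r) (h : ExistsHyperbolicElementary p r a) :
    ExistsHyperbolicElementary p r (a + 2) := by
  obtain ⟨M, N, hM, he, hh, hN, hdet⟩ := h
  have hp0 : (p : ℤ) ≠ 0 := by exact_mod_cast hp.ne_zero
  obtain ⟨v, j, ⟨q, hq⟩, ⟨m, hm⟩⟩ := exists_isotropic_vector hp hodd har hM hdet
  have hNM : N * M = (p : ℤ) • (1 : Matrix (Fin r) (Fin r) ℤ) := by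
    have h1 : M * (N * M) = M * ((p : ℤ) • 1) := by
      rw [← Matrix.mul_assoc, hN, Matrix.smul_mul, Matrix.mul_smul, Matrix.one_mul, Matrix.mul_one]
    have hM0 : M.det ≠ 0 := by
      intro h0; rw [h0] at hdet; exact pow_ne_zero a hp.ne_zero hdet.symm
    have h2 := congrArg (M.adjugate * ·) h1
    simp only [← Matrix.mul_assoc, adjugate_mul, Matrix.smul_mul, Matrix.one_mul] at h2
    exact smul_right_injective _ hM0 h2
  have hNs : Nᵀ = N := by
    have h1 := congrArg transpose hNM
    rw [transpose_mul, hM.eq, transpose_smul, transpose_one] at h1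
    have h2 := congrArg (N * ·) (h1.trans hN.symm)
    simp only [← Matrix.mul_assoc, hNM, Matrix.smul_mul, Matrix.one_mul] at h2
    exact smul_right_injective _ hp0 h2
  set z : Fin r → ℤ := -m • Pi.single j 1 with hz
  set c : Fin r → ℤ := M *ᵥ v + (p : ℤ) • z with hc
  have hcj : c j = 1 := by
    simp [hc, hz]; linarith
  set y : Fin r → ℤ := v + N *ᵥ z with hy
  have hNc : N *ᵥ c = (p : ℤ) • y := by
    rw [hc, hy, mulVec_add, mulVec_mulVec, hNM, smul_mulVec, one_mulVec, mulVec_smul, smul_add]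
  have hzMv : N *ᵥ z ⬝ᵥ M *ᵥ v = p * (z ⬝ᵥ v) := by
    rw [dotProduct_comm, dotProduct_mulVec, ← mulVec_transpose, hNs, mulVec_mulVec, hNM,
      smul_mulVec, one_mulVec, smul_dotProduct, dotProduct_comm, smul_eq_mul]
  obtain ⟨t, ht⟩ : ∃ t, c ⬝ᵥ y = p * t := by
    refine ⟨q + z ⬝ᵥ v + z ⬝ᵥ y, ?_⟩
    rw [hc, add_dotProduct, smul_dotProduct, smul_eq_mul, hy, dotProduct_add (M *ᵥ v), ← hy,
      dotProduct_comm _ v, hq, dotProduct_comm _ (N *ᵥ z), hzMv]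
    ring
  set T : Matrix (Fin r) (Fin r) ℤ :=
    (1 : Matrix (Fin r) (Fin r) ℤ).updateRow j fun i => if i = j then (p : ℤ) else -c i with hT
  set T' : Matrix (Fin r) (Fin r) ℤ :=
    ((p : ℤ) • (1 : Matrix (Fin r) (Fin r) ℤ)).updateRow j c with hT'
  have hTdet : T.det = p := by
    have := cramer_transpose_apply (1 : Matrix (Fin r) (Fin r) ℤ)
      (fun i => if i = j then (p : ℤ) else -c i) j
    rw [transpose_one, cramer_one] at this
    rw [hT, ← this]
    simp
  have hTT' : T' * T = (p : ℤ) • (1 : Matrix (Fin r) (Fin r) ℤ) := by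
    ext a b
    rw [Matrix.mul_apply]
    rcases eq_or_ne a j with rfl | haj
    · rw [← Finset.add_sum_erase _ _ (Finset.mem_univ a), hT', hT, updateRow_self, updateRow_self,
        hcj, Finset.sum_congr rfl fun x hx => by
          rw [updateRow_ne (Finset.ne_of_mem_erase hx)]]
      rcases eq_or_ne b a with rfl | hba
      · rw [Finset.sum_eq_zero fun x hx => by
          rw [one_apply_ne (Finset.ne_of_mem_erase hx), mul_zero]]
        simp
      · rw [Finset.sum_eq_single b (fun x _ hx => by rw [one_apply_ne hx, mul_zero])
          (fun h => absurd (Finset.mem_erase.2 ⟨hba, Finset.mem_univ _⟩) h)]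
        simp [hba, hba.symm]
    · rw [Finset.sum_eq_single a]
      · rw [hT', hT, updateRow_ne haj, updateRow_ne haj]
        simp
      · intro x _ hx
        rw [hT', updateRow_ne haj, Matrix.smul_apply, one_apply_ne hx.symm, smul_zero, zero_mul]
      · simp
  set N' : Matrix (Fin r) (Fin r) ℤ := Matrix.of fun a b =>
    if a = j then if b = j then t else y b else if b = j then y a else N a b with hN'
  have hTN : T' * N * T'ᵀ = ((p : ℤ) ^ 2) • N' := by
    ext a b
    have h1 := transpose_mul_mul_apply N T'ᵀ a b
    rw [transpose_transpose] at h1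
    rw [h1, Matrix.smul_apply, hN', of_apply]
    have hcol : ∀ a, T'ᵀ.col a = if a = j then c else (p : ℤ) • Pi.single a 1 := by
      intro a
      ext b
      rw [col_apply, transpose_apply, hT', updateRow_apply]
      split_ifs with h
      · rfl
      · simp [Matrix.one_apply, Pi.single_apply, eq_comm]
    have hrow : ∀ x, (N *ᵥ (Pi.single x 1 : Fin r → ℤ)) = N.col x := fun x => by simp
    rw [hcol, hcol]
    split_ifs with ha hb hb
    · rw [hNc, dotProduct_smul, ht]; simp only [smul_eq_mul]; ring
    · rw [dotProduct_mulVec, ← mulVec_transpose, hNs, hNc, smul_dotProduct, dotProduct_smul,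
        dotProduct_single_one]; simp only [smul_eq_mul]; ring
    · rw [hNc, smul_dotProduct, dotProduct_smul, single_one_dotProduct]
      simp only [smul_eq_mul]; ring
    · rw [mulVec_smul, smul_dotProduct, dotProduct_smul, hrow]; simp; ring
  refine ⟨Tᵀ * M * T, N', ?_, fun i => ?_, hh.congr (hTdet ▸ hp0), ?_, ?_⟩
  · rw [Matrix.IsSymm, transpose_mul, transpose_mul, transpose_transpose, hM.eq, Matrix.mul_assoc]
  · rw [transpose_mul_mul_apply]
    exact even_dotProduct_mulVec hM he _
  · have hT2 : T * T' = (p : ℤ) • (1 : Matrix (Fin r) (Fin r) ℤ) := by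
      have h1 := congrArg (T * ·) hTT'
      simp only [← Matrix.mul_assoc, Matrix.mul_smul, Matrix.mul_one] at h1
      have h2 := congrArg (· * T.adjugate) h1
      simp only [Matrix.mul_assoc, mul_adjugate, Matrix.smul_mul, Matrix.mul_smul,
        Matrix.mul_one, hTdet] at h2
      exact smul_right_injective _ hp0 h2
    have hTt : Tᵀ * T'ᵀ = (p : ℤ) • (1 : Matrix (Fin r) (Fin r) ℤ) := by
      rw [← transpose_mul, hTT', transpose_smul, transpose_one]
    refine smul_right_injective _ (pow_ne_zero 2 hp0) ?_
    calc (p : ℤ) ^ 2 • (Tᵀ * M * T * N') = Tᵀ * (M * ((T * T') * N)) * T'ᵀ := by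
          rw [← Matrix.mul_smul, ← hTN]; simp only [Matrix.mul_assoc]
      _ = (p : ℤ) ^ 2 • (p : ℤ) • (1 : Matrix (Fin r) (Fin r) ℤ) := by
          rw [hT2, Matrix.smul_mul, Matrix.one_mul, Matrix.mul_smul, hN, Matrix.mul_smul,
            Matrix.mul_smul, Matrix.mul_one, Matrix.smul_mul, Matrix.smul_mul, hTt, pow_two,
            mul_smul]
  · rw [det_mul, det_mul, det_transpose, hTdet, Int.natAbs_mul, Int.natAbs_mul, hdet,
      Int.natAbs_natCast]
    ring

/-- There is an even positive definite Gram matrix of rank `n` and determinant `± p ^ a` that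
divides `p`. -/
def ExistsPositiveElementary (p n a : ℕ) : Prop :=
  ∃ M N : Matrix (Fin n) (Fin n) ℤ, M.IsSymm ∧ (∀ i, Even (M i i)) ∧
    (∃ P : Matrix (Fin n) (Fin n) ℝ, IsUnit P.det ∧
      Pᵀ * M.map (Int.cast : ℤ → ℝ) * P = diagonal fun _ => 1) ∧
    M * N = (p : ℤ) • (1 : Matrix (Fin n) (Fin n) ℤ) ∧ M.det.natAbs = p ^ a

theorem exists_real_congr_of_int_congr_diagonal {ι : Type*} [Fintype ι] [DecidableEq ι]
    {M T : Matrix ι ι ℤ} {d : ι → ℤ} (h : Tᵀ * M * T = diagonal d) {s : ι → ℝ}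
    (hs : ∀ i, s i * s i = 1) (hd : ∀ i, 0 < s i * d i) :
    ∃ P : Matrix ι ι ℝ, IsUnit P.det ∧ Pᵀ * M.map (Int.cast : ℤ → ℝ) * P = diagonal s := by
  have hT : T.det ≠ 0 := by
    intro h0
    have h1 := congrArg det h
    rw [det_mul, h0, mul_zero, det_diagonal, eq_comm, Finset.prod_eq_zero_iff] at h1
    obtain ⟨i, -, hi⟩ := h1
    simpa [hi] using hd i
  have hR : (T.map (Int.cast : ℤ → ℝ))ᵀ * M.map (Int.cast : ℤ → ℝ) * T.map (Int.cast : ℤ → ℝ) =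
      diagonal fun i => (d i : ℝ) := by
    rw [← transpose_map, ← map_intCast_mul, ← map_intCast_mul, h, diagonal_map Int.cast_zero]
  refine ⟨T.map Int.cast * diagonal fun i => (√(s i * d i))⁻¹, ?_, ?_⟩
  · rw [det_mul, intCast_det, det_diagonal, isUnit_iff_ne_zero]
    refine mul_ne_zero (by exact_mod_cast hT) (Finset.prod_ne_zero_iff.2 fun i _ => ?_)
    exact inv_ne_zero (Real.sqrt_pos.2 (hd i)).ne'
  · rw [transpose_mul, diagonal_transpose, Matrix.mul_assoc, Matrix.mul_assoc,
      ← Matrix.mul_assoc (M.map _), ← Matrix.mul_assoc _ (M.map _ * _),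
      ← Matrix.mul_assoc _ (M.map _), hR, diagonal_mul_diagonal, diagonal_mul_diagonal]
    congr 1
    ext i
    have h1 : √(s i * d i) * √(s i * d i) = s i * d i := Real.mul_self_sqrt (hd i).le
    have h2 : √(s i * d i) ≠ 0 := (Real.sqrt_pos.2 (hd i)).ne'
    field_simp
    linear_combination (-s i) * h1 - (d i : ℝ) * hs i

theorem exists_mul_eq_smul_one_of_natAbs_det {ι : Type*} [Fintype ι] [DecidableEq ι] {p a : ℕ}
    (ha : a ≤ 1) {M : Matrix ι ι ℤ} (hM : M.det.natAbs = p ^ a) :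
    ∃ N, M * N = (p : ℤ) • (1 : Matrix ι ι ℤ) := by
  have h : M.det ∣ p := by
    rw [← Int.natAbs_dvd_natAbs, hM, Int.natAbs_natCast]
    simpa using pow_dvd_pow p ha
  obtain ⟨c, hc⟩ := h
  refine ⟨c • M.adjugate, ?_⟩
  rw [Matrix.mul_smul, mul_adjugate, smul_smul, hc, mul_comm]

theorem ExistsHyperbolicElementary.sum {p r n a b : ℕ} (hr : 0 < r)
    (h₁ : ExistsHyperbolicElementary p r a) (h₂ : ExistsPositiveElementary p n b) :
    ExistsHyperbolicElementary p (r + n) (a + b) := by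
  obtain ⟨M, N, hM, he, ⟨P, hP, hPM⟩, hN, hdet⟩ := h₁
  obtain ⟨M', N', hM', he', ⟨P', hP', hPM'⟩, hN', hdet'⟩ := h₂
  let e : Fin (r + n) ≃ Fin r ⊕ Fin n := finSumFinEquiv.symm
  refine ⟨(fromBlocks M 0 0 (-M')).submatrix e e, (fromBlocks N 0 0 (-N')).submatrix e e,
    ?_, ?_, ⟨(fromBlocks P 0 0 P').submatrix e e, ?_, ?_⟩, ?_, ?_⟩
  · refine IsSymm.submatrix ?_ _
    exact IsSymm.fromBlocks hM (by simp) hM'.neg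
  · intro i
    rw [submatrix_apply]
    rcases e i with j | j
    · simpa using he j
    · simpa using he' j
  · rw [det_submatrix_equiv_self, det_fromBlocks_zero₂₁]
    exact hP.mul hP'
  · rw [← submatrix_map, transpose_submatrix, submatrix_mul_equiv, submatrix_mul_equiv,
      fromBlocks_map, fromBlocks_transpose, fromBlocks_multiply, fromBlocks_multiply]
    have hneg : (-M').map (Int.cast : ℤ → ℝ) = -M'.map (Int.cast : ℤ → ℝ) := by ext; simp
    simp only [transpose_zero, Matrix.map_zero _ Int.cast_zero, Matrix.zero_mul, Matrix.mul_zero,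
      add_zero, zero_add, hneg, hPM, Matrix.mul_neg, Matrix.neg_mul, hPM', diagonal_neg, neg_zero]
    rw [fromBlocks_diagonal, submatrix_diagonal_equiv]
    congr 1
    ext i
    induction i using Fin.addCases with
    | left i => simp [e]
    | right i =>
      simp [e]
      omega
  · rw [submatrix_mul_equiv, fromBlocks_multiply]
    simp only [Matrix.zero_mul, Matrix.mul_zero, add_zero, zero_add, neg_mul_neg, hN, hN']
    rw [show fromBlocks ((p : ℤ) • (1 : Matrix (Fin r) (Fin r) ℤ)) 0 0 ((p : ℤ) • 1) =
        (p : ℤ) • 1 by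
      rw [← fromBlocks_one, fromBlocks_smul, smul_zero, smul_zero], submatrix_smul]
    simp
  · rw [det_submatrix_equiv_self, det_fromBlocks_zero₂₁, det_neg, Int.natAbs_mul, Int.natAbs_mul,
      hdet, hdet', pow_add, Int.natAbs_pow]
    simp

theorem existsHyperbolicElementary_two (p x : ℕ) (a : ℕ) (ha : a ≤ 1) (h : p ^ a = 4 * x + 1) :
    ExistsHyperbolicElementary p 2 a := by
  let M : Matrix (Fin 2) (Fin 2) ℤ := !![2 * (x : ℤ), 1; 1, -2]
  have hdet : M.det.natAbs = p ^ a := by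
    rw [h, det_fin_two_of]; omega
  obtain ⟨N, hN⟩ := exists_mul_eq_smul_one_of_natAbs_det ha hdet
  have hT : !![2, 0; 1, 1]ᵀ * M * !![2, 0; 1, 1] =
      diagonal ![2 * (4 * (x : ℤ) + 1), -2] := by
    ext i j
    fin_cases i <;> fin_cases j <;> simp [M, Matrix.mul_apply, Fin.sum_univ_two]
    ring
  refine ⟨M, N, ?_, ?_, exists_real_congr_of_int_congr_diagonal hT ?_ ?_, hN, hdet⟩
  · ext i j
    fin_cases i <;> fin_cases j <;> rfl
  · rw [Fin.forall_fin_two]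
    exact ⟨even_two_mul (x : ℤ), (even_neg.2 even_two : Even (-2 : ℤ))⟩
  · intro i; split_ifs <;> norm_num
  · rw [Fin.forall_fin_two]
    constructor
    · simp; positivity
    · simp

theorem existsPositiveElementary_two {p m : ℕ} (h : p + 1 = 4 * m) :
    ExistsPositiveElementary p 2 1 := by
  let M : Matrix (Fin 2) (Fin 2) ℤ := !![2, 1; 1, 2 * m]
  have hdet : M.det.natAbs = p ^ 1 := by
    rw [det_fin_two_of, pow_one]; omega
  obtain ⟨N, hN⟩ := exists_mul_eq_smul_one_of_natAbs_det le_rfl hdet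
  have hT : !![1, -1; 0, 2]ᵀ * M * !![1, -1; 0, 2] = diagonal ![2, 2 * (p : ℤ)] := by
    ext i j
    fin_cases i <;> fin_cases j <;> simp [M, Matrix.mul_apply, Fin.sum_univ_two]
    omega
  refine ⟨M, N, ?_, ?_, exists_real_congr_of_int_congr_diagonal hT ?_ ?_, hN, hdet⟩
  · ext i j
    fin_cases i <;> fin_cases j <;> rfl
  · rw [Fin.forall_fin_two]
    exact ⟨even_two, even_two_mul (m : ℤ)⟩
  · simp
  · rw [Fin.forall_fin_two]
    constructor
    · simp
    · simp
      omega

theorem existsPositiveElementary_four_one {p : ℕ} {k l e : ℤ} (hp : 0 < p) (hk : 0 < k)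
    (h : (4 * k - 1) * (4 * l - 1) = 4 * e ^ 2 + p) : ExistsPositiveElementary p 4 1 := by
  let M : Matrix (Fin 4) (Fin 4) ℤ := !![2, 1, 0, 0; 1, 2 * k, 0, e; 0, 0, 2, 1; 0, e, 1, 2 * l]
  have hdet' : M.det = p := by
    simp [M, det_succ_row_zero, Fin.sum_univ_succ, Fin.succAbove]
    linear_combination h
  have hdet : M.det.natAbs = p ^ 1 := by
    rw [hdet']; simp
  obtain ⟨N, hN⟩ := exists_mul_eq_smul_one_of_natAbs_det le_rfl hdet
  let T : Matrix (Fin 4) (Fin 4) ℤ :=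
    !![1, -1, 0, 2 * e; 0, 2, 0, -4 * e; 0, 0, 1, -(4 * k - 1); 0, 0, 0, 2 * (4 * k - 1)]
  have hT : Tᵀ * M * T = diagonal ![2, 2 * (4 * k - 1), 2, 2 * (4 * k - 1) * p] := by
    ext i j
    fin_cases i <;> fin_cases j <;>
      simp [M, T, Matrix.mul_apply, Fin.sum_univ_four]
    all_goals first | ring1 | linear_combination 2 * (4 * k - 1) * h
  have hq : 0 < 4 * k - 1 := by omega
  have hp' : 0 < (p : ℤ) := by exact_mod_cast hp
  refine ⟨M, N, ?_, ?_, exists_real_congr_of_int_congr_diagonal hT ?_ ?_, hN, hdet⟩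
  · ext i j
    fin_cases i <;> fin_cases j <;> rfl
  · simp [Fin.forall_fin_succ, M]
  · simp
  · simp only [Fin.forall_fin_succ, one_mul, Int.cast_pos]
    simp
    exact ⟨by omega, by positivity⟩

theorem existsPositiveElementary_four_two {p : ℕ} {k l e : ℤ} (hp : 0 < p) (hk : 0 < k)
    (h : (4 * k - 1) * (4 * l - 1) = 4 * e ^ 2 + p) : ExistsPositiveElementary p 4 2 := by
  obtain ⟨s, hs⟩ : ∃ s, s = 4 * l - 1 := ⟨_, rfl⟩
  rw [← hs] at h
  let M : Matrix (Fin 4) (Fin 4) ℤ :=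
    !![2, 1, 0, 0; 1, 2 * k, 0, 2 * e; 0, 0, 2 * p * k, p; 0, 2 * e, p, 2 * s]
  let N : Matrix (Fin 4) (Fin 4) ℤ :=
    !![2 * k * s, -(s + 4 * e ^ 2), -2 * e, 4 * e * k;
      -(s + 4 * e ^ 2), 2 * (s + 4 * e ^ 2), 4 * e, -8 * e * k;
      -2 * e, 4 * e, 2, -(4 * k - 1); 4 * e * k, -8 * e * k, -(4 * k - 1), 2 * k * (4 * k - 1)]
  have hdet' : M.det = p ^ 2 := by
    simp [M, det_succ_row_zero, Fin.sum_univ_succ, Fin.succAbove]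
    linear_combination 4 * k * p * h
  have hdet : M.det.natAbs = p ^ 2 := by
    rw [hdet', Int.natAbs_pow, Int.natAbs_natCast]
  have hN : M * N = (p : ℤ) • (1 : Matrix (Fin 4) (Fin 4) ℤ) := by
    ext i j
    fin_cases i <;> fin_cases j <;>
      simp [M, N, Matrix.mul_apply, Fin.sum_univ_four]
    all_goals first | ring1 | linear_combination h | linear_combination 2 * e * h |
      linear_combination -4 * e * h | linear_combination -2 * h | linear_combination 4 * k * h
  let T : Matrix (Fin 4) (Fin 4) ℤ :=
    !![1, -1, 0, 4 * k * e; 0, 2, 0, -8 * k * e; 0, 0, 1, -(4 * k - 1);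
      0, 0, 0, 2 * k * (4 * k - 1)]
  have hT : Tᵀ * M * T =
      diagonal ![2, 2 * (4 * k - 1), 2 * p * k, 2 * k * (4 * k - 1) * p] := by
    ext i j
    fin_cases i <;> fin_cases j <;>
      simp [M, T, Matrix.mul_apply, Fin.sum_univ_four]
    all_goals first | ring1 | linear_combination 8 * k ^ 2 * (4 * k - 1) * h
  have hq : 0 < 4 * k - 1 := by omega
  have hp' : 0 < (p : ℤ) := by exact_mod_cast hp
  refine ⟨M, N, ?_, ?_, exists_real_congr_of_int_congr_diagonal hT ?_ ?_, hN, hdet⟩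
  · ext i j
    fin_cases i <;> fin_cases j <;> rfl
  · simp [Fin.forall_fin_succ, M, mul_assoc]
  · simp
  · simp only [Fin.forall_fin_succ, one_mul, Int.cast_pos]
    simp [hp, hk]
    omega

/-- The Gram matrix of the tree obtained from the Dynkin diagram `E₈` by giving the end of its
longest arm the weight `x`. -/
def treeGram (x : ℤ) : Matrix (Fin 8) (Fin 8) ℤ :=
  !![x, -1, 0, 0, 0, 0, 0, 0;
    -1, 2, -1, 0, 0, 0, 0, 0;
    0, -1, 2, -1, 0, 0, 0, 0;
    0, 0, -1, 2, -1, 0, 0, 0;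
    0, 0, 0, -1, 2, -1, 0, -1;
    0, 0, 0, 0, -1, 2, -1, 0;
    0, 0, 0, 0, 0, -1, 2, 0;
    0, 0, 0, 0, -1, 0, 0, 2]

/-- A lower triangular matrix diagonalising `treeGram x`. -/
def treeBasis : Matrix (Fin 8) (Fin 8) ℤ :=
  !![2, 0, 0, 0, 0, 0, 0, 0;
    3, 3, 0, 0, 0, 0, 0, 0;
    4, 4, 4, 0, 0, 0, 0, 0;
    5, 5, 5, 5, 0, 0, 0, 0;
    6, 6, 6, 6, 6, 0, 0, 0;
    4, 4, 4, 4, 4, 2, 0, 0;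
    2, 2, 2, 2, 2, 1, 1, 0;
    3, 3, 3, 3, 3, 0, 0, 1]

theorem treeBasis_congr_treeGram (x : ℤ) : treeBasisᵀ * treeGram x * treeBasis =
    diagonal ![4 * x - 6, 6, 12, 20, 30, 6, 2, 2] := by
  have h0 : treeBasisᵀ * treeGram 0 * treeBasis = diagonal ![-6, 6, 12, 20, 30, 6, 2, 2] := by
    decide +kernel
  have h1 : treeBasisᵀ * single 0 0 1 * treeBasis = single 0 0 4 := by
    decide +kernel
  have hx : treeGram x = treeGram 0 + x • single 0 0 1 := by
    ext i j
    fin_cases i <;> fin_cases j <;> simp [treeGram]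
  rw [hx, Matrix.mul_add, Matrix.add_mul, Matrix.mul_smul, Matrix.smul_mul, h0, h1]
  ext i j
  fin_cases i <;> fin_cases j <;> simp
  ring

theorem det_treeGram (x : ℤ) : (treeGram x).det = 2 * x - 3 := by
  have h := congrArg det (treeBasis_congr_treeGram x)
  have ht : treeBasis.det = 1440 := by
    rw [det_of_isLowerTriangular]
    · decide +kernel
    · intro i j (hij : i < j)
      revert hij
      fin_cases i <;> fin_cases j <;> simp [treeBasis]
  rw [det_mul, det_mul, det_transpose, ht, det_diagonal] at h
  simp [Fin.prod_univ_succ] at h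
  linarith

theorem isSymm_treeGram (x : ℤ) : (treeGram x).IsSymm := by
  ext i j
  fin_cases i <;> fin_cases j <;> rfl

theorem even_treeGram_apply_self {x : ℤ} (hx : Even x) (i : Fin 8) : Even (treeGram x i i) := by
  fin_cases i <;> first | exact hx | exact even_two

theorem existsPositiveElementary_eight (p : ℕ) : ExistsPositiveElementary p 8 0 := by
  have hdet : (treeGram 2).det.natAbs = p ^ 0 := by rw [det_treeGram]; rfl
  obtain ⟨N, hN⟩ := exists_mul_eq_smul_one_of_natAbs_det zero_le_one hdet
  refine ⟨treeGram 2, N, isSymm_treeGram 2, even_treeGram_apply_self even_two,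
    exists_real_congr_of_int_congr_diagonal (treeBasis_congr_treeGram 2) ?_ ?_, hN, hdet⟩
  · simp
  · simp only [one_mul, Int.cast_pos]
    decide

theorem existsHyperbolicElementary_eight {p : ℕ} (hp : p % 4 = 3) :
    ExistsHyperbolicElementary p 8 1 := by
  obtain ⟨m, hm⟩ : ∃ m, p = 4 * m + 3 := ⟨p / 4, by omega⟩
  let x : ℤ := -2 * m
  have hdet : (-treeGram x).det.natAbs = p ^ 1 := by
    rw [det_neg, det_treeGram]
    simp [x]
    omega
  obtain ⟨N, hN⟩ := exists_mul_eq_smul_one_of_natAbs_det le_rfl hdet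
  have hT : treeBasisᵀ * -treeGram x * treeBasis =
      diagonal (-![4 * x - 6, 6, 12, 20, 30, 6, 2, 2]) := by
    rw [Matrix.mul_neg, Matrix.neg_mul, treeBasis_congr_treeGram, diagonal_neg]
    rfl
  refine ⟨-treeGram x, N, (isSymm_treeGram x).neg, fun i => ?_,
    exists_real_congr_of_int_congr_diagonal hT ?_ ?_, hN, hdet⟩
  · exact (even_treeGram_apply_self ⟨-m, by ring⟩ i).neg
  · intro i; split_ifs <;> norm_num
  · simp only [Fin.forall_fin_succ]
    simp [x]
    positivity

theorem ExistsHyperbolicElementary.add_eight_mul {p r a : ℕ} (hr : 0 < r)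
    (h : ExistsHyperbolicElementary p r a) (k : ℕ) :
    ExistsHyperbolicElementary p (r + 8 * k) a := by
  induction k with
  | zero => exact h
  | succ k ih => exact ih.sum (by omega) (existsPositiveElementary_eight p)

theorem exists_mul_eq_four_mul_sq_add {p : ℕ} (hp : p.Prime) (hp4 : p % 4 = 1) :
    ∃ k l e : ℤ, 0 < k ∧ (4 * k - 1) * (4 * l - 1) = 4 * e ^ 2 + p := by
  have : Fact p.Prime := ⟨hp⟩
  obtain ⟨n, hn⟩ := FiniteField.exists_nonsquare (F := ZMod p) (by rw [ZMod.ringChar_zmod_n]; omega)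
  have hco : Nat.Coprime 4 p :=
    Nat.Coprime.pow_left 2 ((Nat.coprime_primes Nat.prime_two hp).2 (by omega))
  obtain ⟨b, hb4, hbp⟩ := Nat.chineseRemainder hco 3 n.val
  have hb : (b : ZMod p) = n := by
    rw [(ZMod.natCast_eq_natCast_iff _ _ _).2 hbp, ZMod.natCast_val, ZMod.cast_id]
  have hn0 : n ≠ 0 := by rintro rfl; exact hn (IsSquare.zero)
  have hbco : b.Coprime (4 * p) := by
    refine Nat.Coprime.mul_right ?_ ?_
    · rw [Nat.Coprime, hb4.gcd_eq]; rfl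
    · rw [Nat.coprime_comm, hp.coprime_iff_not_dvd, ← ZMod.natCast_eq_zero_iff, hb]
      exact hn0
  obtain ⟨q, -, hq, hqb⟩ :=
    Nat.forall_exists_prime_gt_and_modEq 0 (by have := hp.pos; positivity) hbco
  have hq4 : q % 4 = 3 := (hqb.of_mul_right p).trans hb4
  have hqn : (q : ZMod p) = n := by
    rw [← hb, ZMod.natCast_eq_natCast_iff]
    exact hqb.of_mul_left 4
  have : Fact q.Prime := ⟨hq⟩
  have h1 : legendreSym q p = -1 := by
    rw [legendreSym.quadratic_reciprocity_one_mod_four hp4 (by omega), legendreSym.eq_neg_one_iff]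
    push_cast
    rwa [hqn]
  have h2 : legendreSym q (-p) = 1 := by
    rw [← neg_one_mul, legendreSym.mul, h1, legendreSym.at_neg_one (by omega),
      ZMod.χ₄_nat_three_mod_four hq4]
    rfl
  have hq0 : ((-p : ℤ) : ZMod q) ≠ 0 := by
    intro h0
    rw [(legendreSym.eq_zero_iff q _).2 h0] at h2
    omega
  obtain ⟨y, hy⟩ := (legendreSym.eq_one_iff q hq0).1 h2
  obtain ⟨c, rfl⟩ := ZMod.intCast_surjective y
  have hc : ∃ e : ℤ, (q : ℤ) ∣ (2 * e) ^ 2 + p := by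
    have hdvd : ∀ z : ℤ, (z : ZMod q) = c → (q : ℤ) ∣ z ^ 2 + p := by
      intro z hz
      rw [← ZMod.intCast_zmod_eq_zero_iff_dvd]
      push_cast at hy ⊢
      rw [hz, sq, ← hy]
      ring
    obtain ⟨e, he | he⟩ := c.even_or_odd'
    · exact ⟨e, hdvd _ (by rw [he])⟩
    · refine ⟨(c + q) / 2, hdvd _ ?_⟩
      rw [show 2 * ((c + q) / 2) = c + q by omega]
      simp
  obtain ⟨e, s, hs⟩ := hc
  obtain ⟨k, hk⟩ : ∃ k : ℤ, (q : ℤ) = 4 * k - 1 := ⟨(q + 1) / 4, by omega⟩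
  have hs4 : s % 4 = 3 := by
    have h := congrArg (· % 4) hs
    obtain ⟨m, hm⟩ : ∃ m : ℤ, (p : ℤ) = 4 * m + 1 := ⟨p / 4, by omega⟩
    have h3 : s + 1 = 4 * (k * s - e ^ 2 - m) := by
      rw [hk, hm] at hs
      linear_combination hs
    omega
  refine ⟨k, (s + 1) / 4, e, by omega, ?_⟩
  rw [show 4 * ((s + 1) / 4) - 1 = s by omega, ← hk, ← hs]
  ring

theorem ExistsHyperbolicElementary.extend {p r a R b : ℕ} (hp : p.Prime) (hodd : Odd p)
    (hr : 0 < r) (h : ExistsHyperbolicElementary p r a) (hrR : r ≤ R) (hR : R % 8 = r % 8)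
    (hab : a ≤ b) (hb : b % 2 = a % 2) (hbR : b < R) : ExistsHyperbolicElementary p R b := by
  obtain ⟨k, rfl⟩ : ∃ k, R = r + 8 * k := ⟨(R - r) / 8, by omega⟩
  obtain ⟨m, rfl⟩ : ∃ m, b = a + 2 * m := ⟨(b - a) / 2, by omega⟩
  induction m with
  | zero => exact h.add_eight_mul hr k
  | succ m ih =>
    rw [mul_add, ← add_assoc] at *
    exact (ih (by omega) (by omega) (by omega)).step hp hodd (by omega)

theorem existsHyperbolicElementary_of_conditions {p r a : ℕ} (hp : p.Prime) (hodd : Odd p)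
    (hr : 2 ≤ r) (har : a ≤ r) (hr2 : r % 2 = 0) (heven : a % 2 = 0 → r % 4 = 2)
    (hoddcond : a % 2 = 1 → (p : ℤ) ≡ (-1) ^ (r / 2 - 1) [ZMOD 4])
    (h8 : r % 8 ≠ 2 → 0 < a ∧ a < r) : ExistsHyperbolicElementary p r a := by
  have hU : ExistsHyperbolicElementary p 2 0 := existsHyperbolicElementary_two p 0 0 zero_le_one rfl
  have hp1 : a % 2 = 1 → r % 4 = 2 → p % 4 = 1 := by
    intro h1 h2
    have h := hoddcond h1
    rw [Even.neg_one_pow (by rw [Nat.even_iff]; omega), Int.ModEq] at h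
    omega
  have hp3 : a % 2 = 1 → r % 4 = 0 → p % 4 = 3 := by
    intro h1 h2
    have h := hoddcond h1
    rw [Odd.neg_one_pow (by rw [Nat.odd_iff]; omega), Int.ModEq] at h
    omega
  rw [Nat.odd_iff] at hodd
  have hodd' := Nat.odd_iff.2 hodd
  have hr8 : r % 8 = 2 ∨ r % 8 = 6 ∨ r % 8 = 4 ∨ r % 8 = 0 := by omega
  rcases hr8 with hr8 | hr8 | hr8 | hr8
  · rcases Nat.mod_two_eq_zero_or_one a with ha | ha
    · rcases har.lt_or_eq with har | rfl
      · exact hU.extend hp hodd' two_pos hr hr8 a.zero_le ha har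
      · exact (hU.extend hp hodd' two_pos hr hr8 le_rfl rfl (by omega)).scale hp.pos
    · have h4 := hp1 ha (by omega)
      exact (existsHyperbolicElementary_two p (p / 4) 1 le_rfl (by rw [pow_one]; omega)).extend hp
        hodd' two_pos hr hr8 (by omega) ha (by omega)
  · obtain ⟨ha0, har⟩ := h8 (by omega)
    rcases Nat.mod_two_eq_zero_or_one a with ha | ha
    · have h6 : ExistsHyperbolicElementary p 6 2 := by
        rcases (by omega : p % 4 = 1 ∨ p % 4 = 3) with h4 | h4
        · obtain ⟨k, l, e, hk, h⟩ := exists_mul_eq_four_mul_sq_add hp h4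
          exact hU.sum two_pos (existsPositiveElementary_four_two hp.pos hk h)
        · have hC : ExistsPositiveElementary p 2 1 :=
            existsPositiveElementary_two (m := (p + 1) / 4) (by omega)
          exact (hU.sum two_pos hC).sum four_pos hC
      exact h6.extend hp hodd' (by norm_num) (by omega) hr8 (by omega) ha har
    · obtain ⟨k, l, e, hk, h⟩ := exists_mul_eq_four_mul_sq_add hp (hp1 ha (by omega))
      exact (hU.sum two_pos (existsPositiveElementary_four_one hp.pos hk h)).extend hp hodd'
        (by norm_num) (by omega) hr8 (by omega) ha har
  · obtain ⟨ha0, har⟩ := h8 (by omega)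
    have ha : a % 2 = 1 := by omega
    have h4 := hp3 ha (by omega)
    exact (hU.sum two_pos (existsPositiveElementary_two (m := (p + 1) / 4) (by omega))).extend hp
      hodd' four_pos (by omega) hr8 (by omega) ha har
  · obtain ⟨ha0, har⟩ := h8 (by omega)
    have ha : a % 2 = 1 := by omega
    exact (existsHyperbolicElementary_eight (hp3 ha (by omega))).extend hp hodd' (by norm_num)
      (by omega) hr8 (by omega) ha har

/-- The Rudakov–Shafarevich existence criterion for even hyperbolic `p`-elementary lattices
with `p` an odd prime and invariants `(r, a)`. -/
theorem stmt_10 (p : ℕ) (hp : p.Prime) (hodd : Odd p) (r a : ℕ) (hr : 2 ≤ r) :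
    (∃ M : Matrix (Fin r) (Fin r) ℤ, M.IsSymm ∧ (∀ i, Even (M i i)) ∧ M.det ≠ 0 ∧
        IsHyperbolicGram M ∧ ElemOfLength p a M) ↔
      (a ≤ r ∧
        r % 2 = 0 ∧
        (a % 2 = 0 → r % 4 = 2) ∧
        (a % 2 = 1 → (p : ℤ) ≡ (-1) ^ (r / 2 - 1) [ZMOD 4]) ∧
        (r % 8 ≠ 2 → (0 < a ∧ a < r))) := by
  constructor
  · rintro ⟨M, hM, he, hdet, hhyp, helem⟩
    obtain ⟨⟨N, hN⟩, hd⟩ := (elemOfLength_iff hp hdet).1 helem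
    exact conditions_of_isHyperbolicGram hp hodd hr hM he hhyp hN hd
  · rintro ⟨har, hr2, heven, hoddcond, h8⟩
    obtain ⟨M, N, hM, he, hhyp, hN, hd⟩ :=
      existsHyperbolicElementary_of_conditions hp hodd hr har hr2 heven hoddcond h8
    have hdet : M.det ≠ 0 := by
      rw [← Int.natAbs_ne_zero, hd]
      exact pow_ne_zero _ hp.ne_zero
    exact ⟨M, hM, he, hdet, hhyp, (elemOfLength_iff hp hdet).2 ⟨⟨N, hN⟩, hd⟩⟩
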